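/- arXiv:math/0610495 — 3 statements merged into one kernel-verified Lean document; each statement's English description precedes it below -/
import Mathlib

section
/- Let α1, α2, β be complex numbers with |Re α1|, |Re α2|, |Re β| < 1/8 (so that all Euler products converge). Then A_ζ(−β, α2, −α1; α1, α2, β) = A(α1+β), where A(x) := ∏_p (1−p^{−1−x})(1−2p^{−1}+p^{−1−x})/(1−p^{−1})^2, the product being over all primes p. -/
open Complex

noncomputable section

/-- The cast of a prime number to `ℂ`. -/
def pc (p : Nat.Primes) : ℂ := ((p : ℕ) : ℂ)

/-- The local (at the prime `p`) factor of the Euler product `A_ζ(α1,α2,β;γ1,γ2,δ)`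
appearing in the three-over-three ratios conjecture. -/
def AzetaFactor (a1 a2 b g1 g2 d : ℂ) (p : Nat.Primes) : ℂ :=
  ((1 - pc p ^ (-1 - g1 - d)) * (1 - pc p ^ (-1 - g2 - d)) /
      ((1 - pc p ^ (-1 - a1 - d)) * (1 - pc p ^ (-1 - a2 - d)) *
        (1 - pc p ^ (-1 - g1 - b)) * (1 - pc p ^ (-1 - g2 - b)))) *
    (1 - pc p ^ (b - d) - pc p ^ (-1 - g1 - b) + pc p ^ (-1 - g1 - d)
      - pc p ^ (-1 - g2 - b) + pc p ^ (-1 - g2 - d)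
      + pc p ^ (-2 - g1 - g2 - 2 * b) - pc p ^ (-2 - g1 - g2 - b - d)
      + pc p ^ (b - d) * (1 - pc p ^ (-1 - a1 - b)) * (1 - pc p ^ (-1 - a2 - b)))

/-- The Euler product `A_ζ(α1,α2,β;γ1,γ2,δ)` over all primes. -/
def Azeta (a1 a2 b g1 g2 d : ℂ) : ℂ := ∏' p : Nat.Primes, AzetaFactor a1 a2 b g1 g2 d p

/-- The Euler product `A(x) = ∏_p (1−p^{−1−x})(1−2p^{−1}+p^{−1−x})/(1−p^{−1})^2`. -/
def Aeuler (x : ℂ) : ℂ :=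
  ∏' p : Nat.Primes,
    ((1 - pc p ^ (-1 - x)) * (1 - 2 * (pc p)⁻¹ + pc p ^ (-1 - x))) / (1 - (pc p)⁻¹) ^ 2

/-!
The identity holds prime by prime. Put `P = p⁻¹`, `u = p ^ (-α₁ - β)`, `s = p ^ (-1 - α₂ + α₁)` and
`v = p ^ (-1 + α₁ + β)`, so that `u * v = P`. The first eight terms of the long factor of `A_ζ` are
`(1 - s) * (1 - u) * (1 - P)`, and the last one is `(u - P) * (1 - s)`; their sum is
`(1 - s) * (1 - 2 * P + P * u)`. The factors `1 - s` and `1 - u * s`, the only ones involving `α₂`,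
are nonzero off the lines `Re (α₂ - α₁) = -1` and `Re (α₂ + β) = -1`, and cancel there.

The local factor of `A(x)` is `1 - ((p ^ (-1 - x) - p⁻¹) / (1 - p⁻¹)) ^ 2`, so `A(x)` converges
absolutely as soon as `-1 / 2 < Re x`.
-/

lemma bracket_eq_mul {R : Type*} [CommRing R] {P u v s : R} (huv : u * v = P) :
    1 - u - P + P * u - s + u * s + P * s - P * (u * s) + u * (1 - v) * (1 - s) =
      (1 - s) * (1 - 2 * P + P * u) := by
  linear_combination (s - 1) * huv

lemma ratio_mul_bracket_eq_div {K : Type*} [Field K] {P u v s : K} (huv : u * v = P)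
    (hs : 1 - s ≠ 0) (hus : 1 - u * s ≠ 0) :
    (1 - P * u) * (1 - u * s) / ((1 - P) * (1 - u * s) * (1 - P) * (1 - s)) *
        (1 - u - P + P * u - s + u * s + P * s - P * (u * s) + u * (1 - v) * (1 - s)) =
      (1 - P * u) * (1 - 2 * P + P * u) / (1 - P) ^ 2 := by
  rw [bracket_eq_mul huv]
  field_simp

lemma summable_norm_sub_sq {ι E : Type*} [SeminormedAddCommGroup E] {f g : ι → E}
    (hf : Summable fun i ↦ ‖f i‖ ^ 2) (hg : Summable fun i ↦ ‖g i‖ ^ 2) :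
    Summable fun i ↦ ‖f i - g i‖ ^ 2 := by
  refine .of_nonneg_of_le (fun i ↦ by positivity) (fun i ↦ ?_) ((hf.add hg).mul_left 2)
  calc ‖f i - g i‖ ^ 2 ≤ (‖f i‖ + ‖g i‖) ^ 2 := by gcongr; exact norm_sub_le _ _
    _ ≤ 2 * (‖f i‖ ^ 2 + ‖g i‖ ^ 2) := add_sq_le

lemma one_sub_natCast_cpow_ne_zero {n : ℕ} (hn : 1 < n) {s : ℂ} (hs : s.re ≠ 0) :
    1 - (n : ℂ) ^ s ≠ 0 := by
  intro h
  have norm_eq_one : (n : ℝ) ^ s.re = (n : ℝ) ^ (0 : ℝ) := by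
    rw [← norm_natCast_cpow_of_pos (by lia), ← sub_eq_zero.mp h, norm_one, Real.rpow_zero]
  have one_lt : (1 : ℝ) < n := Nat.one_lt_cast.mpr hn
  exact hs ((Real.rpow_right_inj (one_pos.trans one_lt) one_lt.ne').mp norm_eq_one)

lemma half_le_norm_one_sub_inv {K : Type*} [NormedDivisionRing K] {z : K} (hz : 2 ≤ ‖z‖) :
    1 / 2 ≤ ‖1 - z⁻¹‖ := by
  have inv_le : ‖z⁻¹‖ ≤ 1 / 2 := by
    rw [norm_inv, one_div]
    gcongr
  have := norm_sub_norm_le 1 z⁻¹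
  rw [norm_one] at this
  linarith

lemma pc_ne_zero (p : Nat.Primes) : pc p ≠ 0 :=
  Nat.cast_ne_zero.mpr p.2.ne_zero

lemma two_le_norm_pc (p : Nat.Primes) : 2 ≤ ‖pc p‖ := by
  rw [pc, norm_natCast]
  exact Nat.ofNat_le_cast.mpr p.2.two_le

lemma one_sub_inv_pc_ne_zero (p : Nat.Primes) : 1 - (pc p)⁻¹ ≠ 0 :=
  norm_pos_iff.mp (one_half_pos.trans_le (half_le_norm_one_sub_inv (two_le_norm_pc p)))

lemma summable_norm_pc_cpow_sq {s : ℂ} (hs : s.re < -1 / 2) :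
    Summable fun p ↦ ‖pc p ^ s‖ ^ 2 := by
  have norm_sq_eq (p : Nat.Primes) : ‖pc p ^ s‖ ^ 2 = (p : ℝ) ^ (s.re * 2) := by
    rw [pc, norm_natCast_cpow_of_pos p.2.pos, ← Real.rpow_mul_natCast (Nat.cast_nonneg _),
      Nat.cast_ofNat]
  simp only [norm_sq_eq, Nat.Primes.summable_rpow]
  linarith

/-- The local factor at the prime `p` of the Euler product `A(x)`. -/
def AeulerFactor (x : ℂ) (p : Nat.Primes) : ℂ :=
  ((1 - pc p ^ (-1 - x)) * (1 - 2 * (pc p)⁻¹ + pc p ^ (-1 - x))) / (1 - (pc p)⁻¹) ^ 2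

lemma AeulerFactor_eq_one_add (x : ℂ) (p : Nat.Primes) :
    AeulerFactor x p = 1 + -((pc p ^ (-1 - x) - (pc p)⁻¹) / (1 - (pc p)⁻¹)) ^ 2 := by
  have := one_sub_inv_pc_ne_zero p
  rw [AeulerFactor]
  generalize (pc p)⁻¹ = P at *
  field_simp
  ring

lemma multipliable_AeulerFactor {x : ℂ} (hx : -1 / 2 < x.re) : Multipliable (AeulerFactor x) := by
  have summable_numerator : Summable fun p ↦ ‖pc p ^ (-1 - x) - (pc p)⁻¹‖ ^ 2 := by
    simp only [← cpow_neg_one]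
    refine summable_norm_sub_sq (summable_norm_pc_cpow_sq ?_) (summable_norm_pc_cpow_sq ?_)
    · rw [sub_re, neg_re, one_re]
      linarith
    · norm_num
  simp only [funext (AeulerFactor_eq_one_add x)]
  refine multipliable_one_add_of_summable
    (.of_nonneg_of_le (fun p ↦ norm_nonneg _) (fun p ↦ ?_) (summable_numerator.mul_left 4))
  calc ‖-((pc p ^ (-1 - x) - (pc p)⁻¹) / (1 - (pc p)⁻¹)) ^ 2‖
      = (‖pc p ^ (-1 - x) - (pc p)⁻¹‖ / ‖1 - (pc p)⁻¹‖) ^ 2 := by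
        rw [norm_neg, norm_pow, norm_div]
    _ ≤ (‖pc p ^ (-1 - x) - (pc p)⁻¹‖ / (1 / 2)) ^ 2 := by
        gcongr
        exact half_le_norm_one_sub_inv (two_le_norm_pc p)
    _ = 4 * ‖pc p ^ (-1 - x) - (pc p)⁻¹‖ ^ 2 := by ring

lemma AzetaFactor_eq_AeulerFactor {a1 a2 b : ℂ} (h2 : (a2 + b).re ≠ -1) (h3 : (a2 - a1).re ≠ -1)
    (p : Nat.Primes) : AzetaFactor (-b) a2 (-a1) a1 a2 b p = AeulerFactor (a1 + b) p := by
  have cpow_eq_mul {x y z : ℂ} (h : z = x + y) : pc p ^ z = pc p ^ x * pc p ^ y := by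
    rw [h, cpow_add _ _ (pc_ne_zero p)]
  have hP : pc p ^ (-1 : ℂ) = (pc p)⁻¹ := cpow_neg_one _
  have huv : pc p ^ (-a1 - b) * pc p ^ (-1 + a1 + b) = (pc p)⁻¹ := by
    rw [← cpow_eq_mul (z := -1) (by ring), hP]
  have hPu : pc p ^ (-1 - a1 - b) = (pc p)⁻¹ * pc p ^ (-a1 - b) := by
    rw [← hP]; exact cpow_eq_mul (by ring)
  have hus : pc p ^ (-1 - a2 - b) = pc p ^ (-a1 - b) * pc p ^ (-1 - a2 + a1) :=
    cpow_eq_mul (by ring)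
  have hPs : pc p ^ (-2 - a1 - a2 - 2 * -a1) = (pc p)⁻¹ * pc p ^ (-1 - a2 + a1) := by
    rw [← hP]; exact cpow_eq_mul (by ring)
  have hPus : pc p ^ (-2 - a1 - a2 - -a1 - b) =
      (pc p)⁻¹ * (pc p ^ (-a1 - b) * pc p ^ (-1 - a2 + a1)) := by
    rw [← hP, ← hus]; exact cpow_eq_mul (by ring)
  have one_sub_s_ne_zero : 1 - pc p ^ (-1 - a2 + a1) ≠ 0 := by
    refine one_sub_natCast_cpow_ne_zero p.2.one_lt fun h ↦ h3 ?_
    simp only [add_re, sub_re, neg_re, one_re] at h ⊢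
    linarith
  have one_sub_us_ne_zero : 1 - pc p ^ (-a1 - b) * pc p ^ (-1 - a2 + a1) ≠ 0 := by
    rw [← hus]
    refine one_sub_natCast_cpow_ne_zero p.2.one_lt fun h ↦ h2 ?_
    simp only [add_re, sub_re, neg_re, one_re] at h ⊢
    linarith
  rw [AzetaFactor, AeulerFactor, show -1 - (a1 + b) = -1 - a1 - b by ring,
    show -1 - -b - b = (-1 : ℂ) by ring, show -1 - a1 - -a1 = (-1 : ℂ) by ring,
    show -1 - a2 - -a1 = -1 - a2 + a1 by ring, show -1 - -b - -a1 = -1 + a1 + b by ring,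
    hP, hPu, hus, hPs, hPus]
  exact ratio_mul_bracket_eq_div huv one_sub_s_ne_zero one_sub_us_ne_zero

theorem stmt_6_general {a1 a2 b : ℂ} (h1 : -1 / 2 < (a1 + b).re) (h2 : (a2 + b).re ≠ -1)
    (h3 : (a2 - a1).re ≠ -1) :
    HasProd (AzetaFactor (-b) a2 (-a1) a1 a2 b) (Aeuler (a1 + b)) := by
  rw [funext (AzetaFactor_eq_AeulerFactor h2 h3)]
  exact (multipliable_AeulerFactor h1).hasProd

/-- `A_ζ(−β, α2, −α1; α1, α2, β) = A(α1+β)`. -/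
theorem stmt_6 (a1 a2 b : ℂ)
    (h1 : |a1.re| < 1 / 8) (h2 : |a2.re| < 1 / 8) (h3 : |b.re| < 1 / 8) :
    Azeta (-b) a2 (-a1) a1 a2 b = Aeuler (a1 + b) := by
  rw [abs_lt] at h1 h2 h3
  refine (stmt_6_general ?_ ?_ ?_).tprod_eq <;> simp only [add_re, sub_re] <;> grind

end
end

section
/- Let α1, α2, β be complex numbers with 0 < Re α1, Re α2, Re β < 1/8 and with α1+β, α2+β, α1−α2 all nonzero. Then the triple mixed partial derivative (∂/∂α1)(∂/∂α2)(∂/∂β) of G(α1,α2,β;γ1,γ2,δ) := Y(α1,α2,β;γ1,γ2,δ)·A_ζ(α1,α2,β;γ1,γ2,δ), evaluated at γ1 = α1, γ2 = α2, δ = β, equals the triple mixed partial derivative (∂/∂α1)(∂/∂α2)(∂/∂β) of A_ζ(α1,α2,β;γ1,γ2,δ) evaluated at the same point; that is, all contributions involving derivatives of the factor Y cancel on the diagonal. -/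
open Complex

noncomputable section

/-- The factor `Y(α1,α2,β;γ1,γ2,δ)` built out of values of the Riemann zeta function. -/
def Yfactor (a1 a2 b g1 g2 d : ℂ) : ℂ :=
  (riemannZeta (1 + a1 + b) * riemannZeta (1 + a2 + b) *
      riemannZeta (1 + g1 + d) * riemannZeta (1 + g2 + d)) /
    (riemannZeta (1 + a1 + d) * riemannZeta (1 + a2 + d) *
      riemannZeta (1 + g1 + b) * riemannZeta (1 + g2 + b))

/-- `G = Y · A_ζ`. -/
def Gfun (a1 a2 b g1 g2 d : ℂ) : ℂ := Yfactor a1 a2 b g1 g2 d * Azeta a1 a2 b g1 g2 d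

/-! On `β = δ` both `Y` and `A_ζ` are identically `1` in the remaining variables, so there
`∂_β G = ∂_β Y + ∂_β A_ζ`. Moreover `∂_β Y` is the logarithmic derivative of `Y`, a sum of functions
of single variables, so `∂_α₁ ∂_α₂` annihilates it. The analytic point is that `∂_β A_ζ` is
holomorphic in `α₂`: every Euler factor is `1` on `β = δ`, so `∂_β A_ζ` is the sum of the
`β`-derivatives of the factors, which converges uniformly by Cauchy's estimate. -/

open Filter Topology Set Function

section MixedDerivative

variable {𝕜 E : Type*} [NontriviallyNormedField 𝕜] [NormedAddCommGroup E] [NormedSpace 𝕜 E]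

theorem deriv_deriv_eq_of_eventually_eq_add {F G : 𝕜 → 𝕜 → E} {u v : 𝕜 → E} {x₀ y₀ : 𝕜}
    (hFG : ∀ᶠ x in 𝓝 x₀, ∀ᶠ y in 𝓝 y₀, G x y = u x + v y + F x y)
    (hv : DifferentiableAt 𝕜 v y₀) (hF : ∀ᶠ x in 𝓝 x₀, DifferentiableAt 𝕜 (F x) y₀) :
    deriv (fun x => deriv (G x) y₀) x₀ = deriv (fun x => deriv (F x) y₀) x₀ := by
  have hderiv : (fun x => deriv (G x) y₀) =ᶠ[𝓝 x₀] fun x => deriv v y₀ + deriv (F x) y₀ := by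
    filter_upwards [hFG, hF] with x hG hFx
    rw [EventuallyEq.deriv_eq hG, deriv_fun_add (hv.const_add (u x)) hFx, deriv_const_add]
  rw [hderiv.deriv_eq, deriv_const_add]

end MixedDerivative

section InfiniteProduct

variable {ι : Type*} {u : ι → ℝ} {U V : Set ℂ} {b : ℂ}

theorem multipliableLocallyUniformlyOn_of_norm_sub_one_le {f : ι → ℂ → ℂ} (hV : IsOpen V)
    (hu : Summable u) (hf : ∀ i, ContinuousOn (f i) V)
    (hfu : ∀ i, ∀ y ∈ V, ‖f i y - 1‖ ≤ u i) : MultipliableLocallyUniformlyOn f V := by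
  simpa only [add_sub_cancel] using hu.multipliableLocallyUniformlyOn_one_add hV
    (.of_forall hfu) fun i => (hf i).sub continuousOn_const

theorem differentiableOn_tprod_of_norm_sub_one_le {f : ι → ℂ → ℂ} (hV : IsOpen V)
    (hu : Summable u) (hf : ∀ i, DifferentiableOn ℂ (f i) V)
    (hfu : ∀ i, ∀ y ∈ V, ‖f i y - 1‖ ≤ u i) :
    DifferentiableOn ℂ (fun y => ∏' i, f i y) V := by
  have hmult := multipliableLocallyUniformlyOn_of_norm_sub_one_le hV hu
    (fun i => (hf i).continuousOn) hfu
  exact hmult.hasProdLocallyUniformlyOn.differentiableOn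
    (.of_forall fun _ => DifferentiableOn.fun_finsetProd fun i _ => hf i) hV

theorem deriv_tprod_eq_tsum_deriv_of_eq_one {f : ι → ℂ → ℂ} (hV : IsOpen V) (hb : b ∈ V)
    (hu : Summable u) (hf : ∀ i, DifferentiableOn ℂ (f i) V)
    (hfu : ∀ i, ∀ y ∈ V, ‖f i y - 1‖ ≤ u i) (hone : ∀ i, f i b = 1) :
    deriv (fun y => ∏' i, f i y) b = ∑' i, deriv (f i) b := by
  have hsummable : Summable fun i => deriv (f i) b := by
    simpa only [deriv_sub_const] using
      (hasSum_deriv_of_summable_norm hu (fun i => (hf i).sub_const 1) hV hfu hb).summable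
  have hlog : ∀ i, logDeriv (f i) b = deriv (f i) b := fun i => by
    rw [logDeriv_apply, hone, div_one]
  have hprod : ∏' i, f i b = 1 := by simp only [hone, tprod_one]
  have hmult := multipliableLocallyUniformlyOn_of_norm_sub_one_le hV hu
    (fun i => (hf i).continuousOn) hfu
  calc deriv (fun y => ∏' i, f i y) b = logDeriv (fun y => ∏' i, f i y) b := by
        rw [logDeriv_apply, hprod, div_one]
    _ = ∑' i, logDeriv (f i) b := logDeriv_tprod_eq_tsum hV hb (by simp [hone]) hf
        (by simpa only [hlog]) hmult (by simp [hprod])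
    _ = ∑' i, deriv (f i) b := by simp only [hlog]

theorem differentiableAt_deriv_of_analyticAt_uncurry {f : ℂ → ℂ → ℂ} {x y : ℂ}
    (hf : AnalyticAt ℂ (uncurry f) (x, y)) :
    DifferentiableAt ℂ (fun x => deriv (f x) y) x := by
  have hpartial : (fun x => deriv (f x) y) =ᶠ[𝓝 x]
      fun x => fderiv ℂ (uncurry f) (x, y) (0, 1) := by
    have hslice : Tendsto (fun x => (x, y)) (𝓝 x) (𝓝 (x, y)) :=
      (by fun_prop : Continuous fun x => (x, y)).tendsto x
    filter_upwards [hslice.eventually hf.eventually_analyticAt] with x' hx'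
    exact (hx'.differentiableAt.hasFDerivAt.comp_hasDerivAt y
      ((hasDerivAt_const y x').prodMk (hasDerivAt_id y))).deriv
  refine DifferentiableAt.congr_of_eventuallyEq ?_ hpartial
  have := hf.fderiv.differentiableAt
  fun_prop

theorem differentiableOn_deriv_tprod_of_eq_one {f : ι → ℂ → ℂ → ℂ} (hU : IsOpen U)
    (hV : IsOpen V) (hb : b ∈ V) (hu : Summable u)
    (hf : ∀ i, AnalyticOnNhd ℂ (uncurry (f i)) (U ×ˢ V))
    (hfu : ∀ i, ∀ x ∈ U, ∀ y ∈ V, ‖f i x y - 1‖ ≤ u i) (hone : ∀ i, ∀ x ∈ U, f i x b = 1) :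
    DifferentiableOn ℂ (fun x => deriv (fun y => ∏' i, f i x y) b) U := by
  have hfy : ∀ i, ∀ x ∈ U, DifferentiableOn ℂ (f i x) V := fun i x hx y hy =>
    (AnalyticAt.along_snd (hf i (x, y) ⟨hx, hy⟩)).differentiableAt.differentiableWithinAt
  obtain ⟨r, hr, hball⟩ := Metric.nhds_basis_closedBall.mem_iff.mp (hV.mem_nhds hb)
  have hcauchy : ∀ i, ∀ x ∈ U, ‖deriv (f i x) b‖ ≤ u i / r := fun i x hx => by
    rw [← deriv_sub_const 1]
    exact norm_deriv_le_of_forall_mem_sphere_norm_le hr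
      (((hfy i x hx).sub_const 1).diffContOnCl_ball hball)
      fun y hy => hfu i x hx y (hball (Metric.sphere_subset_closedBall hy))
  refine (differentiableOn_tsum_of_summable_norm (hu.div_const r)
    (fun i x hx => ?_) hU hcauchy).congr fun x hx => ?_
  · exact (differentiableAt_deriv_of_analyticAt_uncurry
      (hf i (x, b) ⟨hx, hb⟩)).differentiableWithinAt
  · exact deriv_tprod_eq_tsum_deriv_of_eq_one hV hb hu (hfy · x hx) (hfu · x hx) (hone · x hx)

end InfiniteProduct

section NearOne

theorem norm_mul_sub_one_le {R : Type*} [NormedRing R] {z w : R} {C D t : ℝ} (hC : 0 ≤ C)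
    (ht₁ : t ≤ 1) (hz : ‖z - 1‖ ≤ C * t) (hw : ‖w - 1‖ ≤ D * t) :
    ‖z * w - 1‖ ≤ (C + D + C * D) * t := by
  have hz₀ := norm_nonneg (z - 1)
  have hprod : ‖(z - 1) * (w - 1)‖ ≤ C * t * (D * t) :=
    (norm_mul_le _ _).trans (by gcongr; exact hz₀.trans hz)
  have hsq : C * t * (D * t) ≤ C * (D * t) := by
    rw [mul_assoc, mul_left_comm]
    exact mul_le_of_le_one_left (mul_nonneg hC ((norm_nonneg (w - 1)).trans hw)) ht₁
  calc ‖z * w - 1‖ = ‖(z - 1) + (w - 1) + (z - 1) * (w - 1)‖ := by congr 1; noncomm_ring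
    _ ≤ ‖z - 1‖ + ‖w - 1‖ + ‖(z - 1) * (w - 1)‖ := norm_add₃_le
    _ ≤ (C + D + C * D) * t := by linarith

variable {𝕜 : Type*} [NormedField 𝕜] {x : 𝕜}

theorem one_half_le_norm_one_sub (hx : ‖x‖ ≤ 1 / 2) : 1 / 2 ≤ ‖1 - x‖ := by
  have := norm_sub_norm_le 1 x
  rw [norm_one] at this
  linarith

theorem one_sub_ne_zero_of_norm_le_half (hx : ‖x‖ ≤ 1 / 2) : 1 - x ≠ 0 :=
  norm_pos_iff.mp (one_half_pos.trans_le (one_half_le_norm_one_sub hx))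

theorem norm_one_sub_div_one_sub_sub_one_le {y : 𝕜} {t : ℝ} (ht : t ≤ 1 / 2) (hx : ‖x‖ ≤ t)
    (hy : ‖y‖ ≤ t) : ‖(1 - x) / (1 - y) - 1‖ ≤ 4 * t := by
  have hy_half := one_half_le_norm_one_sub (hy.trans ht)
  rw [div_sub_one (one_sub_ne_zero_of_norm_le_half (hy.trans ht)), norm_div,
    div_le_iff₀ (one_half_pos.trans_le hy_half)]
  have hnum : ‖1 - x - (1 - y)‖ ≤ t + t := by
    rw [sub_sub_sub_cancel_left]
    exact norm_sub_le_of_le hy hx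
  nlinarith [norm_nonneg x]

end NearOne

section LocalFactor

/-- The local factor of `A_ζ` as a rational function of `xᵢ = p^(-1-αᵢ-δ)`, `w = p^(-1-α₂-β)`,
`uᵢ = p^(-1-γᵢ-β)` and `vᵢ = p^(-1-γᵢ-δ)`. It is arranged so that on `β = δ`, where `w = x₂` and
`uᵢ = vᵢ`, each quotient is visibly `1`. -/
def localFactor (x₁ x₂ w u₁ u₂ v₁ v₂ : ℂ) : ℂ :=
  (1 - v₁) / (1 - u₁) * ((1 - v₂) / (1 - u₂)) *
    (((1 - x₁) * (1 - x₂) + (x₁ * (w - x₂) + (v₁ - u₁) + (1 - u₁) * (v₂ - u₂))) /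
      ((1 - x₁) * (1 - x₂)))

theorem localFactor_self {x₁ x₂ v₁ v₂ : ℂ} (hx₁ : 1 - x₁ ≠ 0) (hx₂ : 1 - x₂ ≠ 0)
    (hv₁ : 1 - v₁ ≠ 0) (hv₂ : 1 - v₂ ≠ 0) : localFactor x₁ x₂ x₂ v₁ v₂ v₁ v₂ = 1 := by
  simp [localFactor, hx₁, hx₂, hv₁, hv₂]

theorem norm_localFactor_sub_one_le {x₁ x₂ w u₁ u₂ v₁ v₂ : ℂ} {t : ℝ} (ht : t ≤ 1 / 2)
    (hx₁ : ‖x₁‖ ≤ t) (hx₂ : ‖x₂‖ ≤ t) (hw : ‖w‖ ≤ t) (hu₁ : ‖u₁‖ ≤ t) (hu₂ : ‖u₂‖ ≤ t)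
    (hv₁ : ‖v₁‖ ≤ t) (hv₂ : ‖v₂‖ ≤ t) :
    ‖localFactor x₁ x₂ w u₁ u₂ v₁ v₂ - 1‖ ≤ 624 * t := by
  have ht₀ : 0 ≤ t := (norm_nonneg x₁).trans hx₁
  have hx_half : 1 / 4 ≤ ‖(1 - x₁) * (1 - x₂)‖ := by
    rw [norm_mul]
    nlinarith [one_half_le_norm_one_sub (hx₁.trans ht), one_half_le_norm_one_sub (hx₂.trans ht)]
  have hx_ne : (1 - x₁) * (1 - x₂) ≠ 0 := norm_pos_iff.mp (by linarith)
  have hdefect : ‖x₁ * (w - x₂) + (v₁ - u₁) + (1 - u₁) * (v₂ - u₂)‖ ≤ 6 * t := by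
    have hxw : ‖x₁ * (w - x₂)‖ ≤ 1 / 2 * (t + t) :=
      norm_mul_le_of_le (hx₁.trans ht) (norm_sub_le_of_le hw hx₂)
    have hu_sub : ‖1 - u₁‖ ≤ 1 + 1 / 2 := norm_sub_le_of_le norm_one.le (hu₁.trans ht)
    have huv : ‖(1 - u₁) * (v₂ - u₂)‖ ≤ (1 + 1 / 2) * (t + t) :=
      norm_mul_le_of_le hu_sub (norm_sub_le_of_le hv₂ hu₂)
    have hvu : ‖v₁ - u₁‖ ≤ t + t := norm_sub_le_of_le hv₁ hu₁
    exact norm_add₃_le.trans (by linarith)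
  have hratio : ‖((1 - x₁) * (1 - x₂) + (x₁ * (w - x₂) + (v₁ - u₁) + (1 - u₁) * (v₂ - u₂))) /
      ((1 - x₁) * (1 - x₂)) - 1‖ ≤ 24 * t := by
    rw [div_sub_one hx_ne, add_sub_cancel_left, norm_div, div_le_iff₀ (by linarith)]
    nlinarith
  have hgamma := norm_mul_sub_one_le (by norm_num) (by linarith)
    (norm_one_sub_div_one_sub_sub_one_le ht hv₁ hu₁)
    (norm_one_sub_div_one_sub_sub_one_le ht hv₂ hu₂)
  exact (norm_mul_sub_one_le (by norm_num) (by linarith) hgamma hratio).trans_eq (by norm_num)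

theorem AzetaFactor_eq_localFactor (a1 a2 b g1 g2 d : ℂ) (p : Nat.Primes) :
    AzetaFactor a1 a2 b g1 g2 d p =
      localFactor (pc p ^ (-1 - a1 - d)) (pc p ^ (-1 - a2 - d)) (pc p ^ (-1 - a2 - b))
        (pc p ^ (-1 - g1 - b)) (pc p ^ (-1 - g2 - b))
        (pc p ^ (-1 - g1 - d)) (pc p ^ (-1 - g2 - d)) := by
  have hp : pc p ≠ 0 := Nat.cast_ne_zero.mpr p.2.ne_zero
  have hx₁ : pc p ^ (-1 - a1 - d) = pc p ^ (b - d) * pc p ^ (-1 - a1 - b) := by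
    rw [← cpow_add _ _ hp]; congr 1; ring
  have hx₂ : pc p ^ (-1 - a2 - d) = pc p ^ (b - d) * pc p ^ (-1 - a2 - b) := by
    rw [← cpow_add _ _ hp]; congr 1; ring
  have huu : pc p ^ (-2 - g1 - g2 - 2 * b) = pc p ^ (-1 - g1 - b) * pc p ^ (-1 - g2 - b) := by
    rw [← cpow_add _ _ hp]; congr 1; ring
  have huv : pc p ^ (-2 - g1 - g2 - b - d) = pc p ^ (-1 - g1 - b) * pc p ^ (-1 - g2 - d) := by
    rw [← cpow_add _ _ hp]; congr 1; ring
  have hnum {r x₁ x₂ u₁ u₂ v₁ v₂ : ℂ} :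
      1 - r - u₁ + v₁ - u₂ + v₂ + u₁ * u₂ - u₁ * v₂ + r * (1 - x₁) * (1 - x₂) =
        (1 - r * x₁) * (1 - r * x₂) +
          (r * x₁ * (x₂ - r * x₂) + (v₁ - u₁) + (1 - u₁) * (v₂ - u₂)) := by ring
  rw [AzetaFactor, localFactor, huu, huv, hnum, ← hx₁, ← hx₂]
  simp only [div_eq_mul_inv, mul_inv]
  ring

end LocalFactor

section EulerProduct

/-- The half-plane `c < Re (z + d)`. The factor `A_ζ` depends on its parameters only through the
sums of one of `αᵢ, γᵢ` and one of `β, δ`, so these half-planes are its natural domains. -/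
def shiftedHalfPlane (d : ℂ) (c : ℝ) : Set ℂ := {z | c < (z + d).re}

theorem isOpen_shiftedHalfPlane (d : ℂ) (c : ℝ) : IsOpen (shiftedHalfPlane d c) :=
  isOpen_lt continuous_const (by fun_prop)

theorem exists_pos_mem_shiftedHalfPlane {d : ℂ} {s : Finset ℂ} (hs : ∀ z ∈ s, 0 < (z + d).re) :
    ∃ c : ℝ, 0 < c ∧ ∀ z ∈ s, z ∈ shiftedHalfPlane d (2 * c) := by
  have hsmall : ∀ᶠ c : ℝ in 𝓝[>] 0, ∀ z ∈ s, z ∈ shiftedHalfPlane d (2 * c) := by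
    refine (Finset.eventually_all s).mpr fun z hz => nhdsWithin_le_nhds ?_
    exact (by fun_prop : ContinuousAt (fun c : ℝ => 2 * c) 0).eventually_lt continuousAt_const
      (by simpa using hs z hz)
  exact (eventually_mem_nhdsWithin.and hsmall).exists

theorem self_mem_shiftedHalfPlane {d : ℂ} {c : ℝ} (hc : 0 < c) :
    d ∈ shiftedHalfPlane (-d) (-c) := by
  simpa [shiftedHalfPlane] using hc

theorem re_add_pos_of_mem_shiftedHalfPlane {z d : ℂ} {c : ℝ} (hc : 0 < c)
    (hz : z ∈ shiftedHalfPlane d (2 * c)) : 0 < (z + d).re :=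
  (mul_pos two_pos hc).trans hz

theorem summable_prime_rpow {c C : ℝ} (hc : 0 < c) :
    Summable fun p : Nat.Primes => C * (p : ℝ) ^ (-1 - c) :=
  (Nat.Primes.summable_rpow.mpr (by linarith)).mul_left C

theorem norm_pc_cpow_le {x y : ℂ} {c : ℝ} (hxy : c ≤ (x + y).re) (p : Nat.Primes) :
    ‖pc p ^ (-1 - x - y)‖ ≤ (p : ℝ) ^ (-1 - c) := by
  rw [pc, norm_natCast_cpow_of_pos p.2.pos]
  refine Real.rpow_le_rpow_of_exponent_le (mod_cast p.2.one_le) ?_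
  simp only [add_re, sub_re, neg_re, one_re] at hxy ⊢
  linarith

theorem rpow_neg_one_sub_le_half {x c : ℝ} (hx : 2 ≤ x) (hc : 0 ≤ c) :
    x ^ (-1 - c) ≤ 1 / 2 := by
  calc x ^ (-1 - c) ≤ x ^ (-1 : ℝ) :=
        Real.rpow_le_rpow_of_exponent_le (by linarith) (by linarith)
    _ = x⁻¹ := Real.rpow_neg_one x
    _ ≤ 1 / 2 := by rw [one_div]; gcongr

theorem one_sub_pc_cpow_ne_zero {x y : ℂ} (hxy : 0 ≤ (x + y).re) (p : Nat.Primes) :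
    1 - pc p ^ (-1 - x - y) ≠ 0 :=
  one_sub_ne_zero_of_norm_le_half
    ((norm_pc_cpow_le hxy p).trans (rpow_neg_one_sub_le_half (mod_cast p.2.two_le) le_rfl))

theorem AzetaFactor_self {a1 a2 g1 g2 d : ℂ} (ha1 : 0 ≤ (a1 + d).re) (ha2 : 0 ≤ (a2 + d).re)
    (hg1 : 0 ≤ (g1 + d).re) (hg2 : 0 ≤ (g2 + d).re) (p : Nat.Primes) :
    AzetaFactor a1 a2 d g1 g2 d p = 1 := by
  rw [AzetaFactor_eq_localFactor]
  exact localFactor_self (one_sub_pc_cpow_ne_zero ha1 p) (one_sub_pc_cpow_ne_zero ha2 p)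
    (one_sub_pc_cpow_ne_zero hg1 p) (one_sub_pc_cpow_ne_zero hg2 p)

theorem Azeta_self {a1 a2 g1 g2 d : ℂ} (ha1 : 0 ≤ (a1 + d).re) (ha2 : 0 ≤ (a2 + d).re)
    (hg1 : 0 ≤ (g1 + d).re) (hg2 : 0 ≤ (g2 + d).re) : Azeta a1 a2 d g1 g2 d = 1 := by
  simp only [Azeta, AzetaFactor_self ha1 ha2 hg1 hg2, tprod_one]

variable {a1 a2 b g1 g2 d : ℂ} {c : ℝ}

theorem lt_re_add_of_mem_shiftedHalfPlane {z : ℂ} (hz : z ∈ shiftedHalfPlane d (2 * c))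
    (hb : b ∈ shiftedHalfPlane (-d) (-c)) : c < (z + b).re := by
  simp only [shiftedHalfPlane, mem_ofPred_eq, add_re, neg_re] at hz hb ⊢
  linarith

theorem norm_AzetaFactor_sub_one_le (hc : 0 ≤ c) (ha1 : a1 ∈ shiftedHalfPlane d (2 * c))
    (ha2 : a2 ∈ shiftedHalfPlane d (2 * c)) (hg1 : g1 ∈ shiftedHalfPlane d (2 * c))
    (hg2 : g2 ∈ shiftedHalfPlane d (2 * c)) (hb : b ∈ shiftedHalfPlane (-d) (-c))
    (p : Nat.Primes) : ‖AzetaFactor a1 a2 b g1 g2 d p - 1‖ ≤ 624 * (p : ℝ) ^ (-1 - c) := by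
  have hd : ∀ z ∈ shiftedHalfPlane d (2 * c), ‖pc p ^ (-1 - z - d)‖ ≤ (p : ℝ) ^ (-1 - c) :=
    fun z hz => norm_pc_cpow_le (le_trans (by linarith) (le_of_lt hz)) p
  have hb' : ∀ z ∈ shiftedHalfPlane d (2 * c), ‖pc p ^ (-1 - z - b)‖ ≤ (p : ℝ) ^ (-1 - c) :=
    fun z hz => norm_pc_cpow_le (lt_re_add_of_mem_shiftedHalfPlane hz hb).le p
  rw [AzetaFactor_eq_localFactor]
  exact norm_localFactor_sub_one_le (rpow_neg_one_sub_le_half (mod_cast p.2.two_le) hc)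
    (hd a1 ha1) (hd a2 ha2) (hb' a2 ha2) (hb' g1 hg1) (hb' g2 hg2) (hd g1 hg1) (hd g2 hg2)

theorem analyticOnNhd_AzetaFactor (hc : 0 ≤ c) (ha1 : a1 ∈ shiftedHalfPlane d (2 * c))
    (hg1 : g1 ∈ shiftedHalfPlane d (2 * c)) (hg2 : g2 ∈ shiftedHalfPlane d (2 * c))
    (p : Nat.Primes) :
    AnalyticOnNhd ℂ (uncurry fun a2 b => AzetaFactor a1 a2 b g1 g2 d p)
      (shiftedHalfPlane d (2 * c) ×ˢ shiftedHalfPlane (-d) (-c)) := by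
  rintro ⟨a2, b⟩ ⟨ha2, hb⟩
  have hd : ∀ z ∈ shiftedHalfPlane d (2 * c), 1 - pc p ^ (-1 - z - d) ≠ 0 := fun z hz =>
    one_sub_pc_cpow_ne_zero (le_trans (by linarith) (le_of_lt hz)) p
  have hb' : ∀ z ∈ shiftedHalfPlane d (2 * c), 1 - pc p ^ (-1 - z - b) ≠ 0 := fun z hz =>
    one_sub_pc_cpow_ne_zero (hc.trans (lt_re_add_of_mem_shiftedHalfPlane hz hb).le) p
  have hp : pc p ∈ slitPlane := natCast_mem_slitPlane.mpr p.2.ne_zero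
  have hfst : AnalyticAt ℂ (fun q : ℂ × ℂ => q.1) (a2, b) := analyticAt_fst
  have hsnd : AnalyticAt ℂ (fun q : ℂ × ℂ => q.2) (a2, b) := analyticAt_snd
  have hdenom := mul_ne_zero
    (mul_ne_zero (mul_ne_zero (hd a1 ha1) (hd a2 ha2)) (hb' g1 hg1)) (hb' g2 hg2)
  unfold uncurry AzetaFactor
  fun_prop (disch := assumption)

variable (hc : 0 < c) (ha1 : a1 ∈ shiftedHalfPlane d (2 * c))
  (hg1 : g1 ∈ shiftedHalfPlane d (2 * c)) (hg2 : g2 ∈ shiftedHalfPlane d (2 * c))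
include hc ha1 hg1 hg2

theorem differentiableAt_Azeta (ha2 : a2 ∈ shiftedHalfPlane d (2 * c)) :
    DifferentiableAt ℂ (fun b => Azeta a1 a2 b g1 g2 d) d := by
  have hV := isOpen_shiftedHalfPlane (-d) (-c)
  refine (differentiableOn_tprod_of_norm_sub_one_le hV (summable_prime_rpow hc)
    (fun p b hb => ?_) fun p b hb =>
      norm_AzetaFactor_sub_one_le hc.le ha1 ha2 hg1 hg2 hb p).differentiableAt
    (hV.mem_nhds (self_mem_shiftedHalfPlane hc))
  exact ((analyticOnNhd_AzetaFactor hc.le ha1 hg1 hg2 p (a2, b)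
    ⟨ha2, hb⟩).along_snd).differentiableAt.differentiableWithinAt

theorem differentiableOn_deriv_Azeta :
    DifferentiableOn ℂ (fun a2 => deriv (fun b => Azeta a1 a2 b g1 g2 d) d)
      (shiftedHalfPlane d (2 * c)) :=
  differentiableOn_deriv_tprod_of_eq_one (isOpen_shiftedHalfPlane d (2 * c))
    (isOpen_shiftedHalfPlane (-d) (-c)) (self_mem_shiftedHalfPlane hc) (summable_prime_rpow hc)
    (analyticOnNhd_AzetaFactor hc.le ha1 hg1 hg2)
    (fun p _ ha2 _ hb => norm_AzetaFactor_sub_one_le hc.le ha1 ha2 hg1 hg2 hb p)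
    fun p _ ha2 => AzetaFactor_self (re_add_pos_of_mem_shiftedHalfPlane hc ha1).le
      (re_add_pos_of_mem_shiftedHalfPlane hc ha2).le
      (re_add_pos_of_mem_shiftedHalfPlane hc hg1).le
      (re_add_pos_of_mem_shiftedHalfPlane hc hg2).le p

end EulerProduct

section ZetaRatio

theorem one_lt_re_one_add {x y : ℂ} (hxy : 0 < (x + y).re) : 1 < (1 + x + y).re := by
  simpa [add_assoc] using hxy

theorem one_add_ne_one {x y : ℂ} (hxy : 0 < (x + y).re) : 1 + x + y ≠ 1 := fun h => by
  simpa [h] using one_lt_re_one_add hxy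

theorem riemannZeta_one_add_ne_zero {x y : ℂ} (hxy : 0 < (x + y).re) :
    riemannZeta (1 + x + y) ≠ 0 :=
  riemannZeta_ne_zero_of_one_lt_re (one_lt_re_one_add hxy)

theorem differentiableAt_logDeriv_riemannZeta_one_add {x y : ℂ} (hxy : 0 < (x + y).re) :
    DifferentiableAt ℂ (fun x => logDeriv riemannZeta (1 + x + y)) x := by
  have hζ := analyticOn_riemannZeta (1 + x + y) (one_add_ne_one hxy)
  have hlog : DifferentiableAt ℂ (logDeriv riemannZeta) (1 + x + y) :=
    (hζ.deriv.div hζ (riemannZeta_one_add_ne_zero hxy)).differentiableAt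
  exact hlog.comp x (f := fun x => 1 + x + y) (by fun_prop)

theorem hasDerivAt_riemannZeta_one_add {x y : ℂ} (hxy : 0 < (x + y).re) :
    HasDerivAt (fun y => riemannZeta (1 + x + y))
      (riemannZeta (1 + x + y) * logDeriv riemannZeta (1 + x + y)) y := by
  rw [logDeriv_apply, mul_div_cancel₀ _ (riemannZeta_one_add_ne_zero hxy)]
  exact (differentiableAt_riemannZeta (one_add_ne_one hxy)).hasDerivAt.comp_const_add _ _

variable {a1 a2 g1 g2 d : ℂ} (ha1 : 0 < (a1 + d).re) (ha2 : 0 < (a2 + d).re)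
  (hg1 : 0 < (g1 + d).re) (hg2 : 0 < (g2 + d).re)
include ha1 ha2 hg1 hg2

theorem Yfactor_self : Yfactor a1 a2 d g1 g2 d = 1 := by
  have hζa := mul_ne_zero (riemannZeta_one_add_ne_zero ha1) (riemannZeta_one_add_ne_zero ha2)
  exact div_self (mul_ne_zero (mul_ne_zero hζa (riemannZeta_one_add_ne_zero hg1))
    (riemannZeta_one_add_ne_zero hg2))

theorem hasDerivAt_Yfactor :
    HasDerivAt (fun b => Yfactor a1 a2 b g1 g2 d)
      (logDeriv riemannZeta (1 + a1 + d) + logDeriv riemannZeta (1 + a2 + d) -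
        logDeriv riemannZeta (1 + g1 + d) - logDeriv riemannZeta (1 + g2 + d)) d := by
  have hζa1 := riemannZeta_one_add_ne_zero ha1
  have hζa2 := riemannZeta_one_add_ne_zero ha2
  have hζg1 := riemannZeta_one_add_ne_zero hg1
  have hζg2 := riemannZeta_one_add_ne_zero hg2
  have hnum := (((hasDerivAt_riemannZeta_one_add ha1).fun_mul
    (hasDerivAt_riemannZeta_one_add ha2)).mul_const (riemannZeta (1 + g1 + d))).mul_const
      (riemannZeta (1 + g2 + d))
  have hdenom := ((hasDerivAt_riemannZeta_one_add hg1).const_mul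
    (riemannZeta (1 + a1 + d) * riemannZeta (1 + a2 + d))).fun_mul
      (hasDerivAt_riemannZeta_one_add hg2)
  have hdenom_ne := mul_ne_zero (mul_ne_zero (mul_ne_zero hζa1 hζa2) hζg1) hζg2
  refine (hnum.fun_div hdenom hdenom_ne).congr_deriv ?_
  field_simp
  ring

end ZetaRatio

theorem deriv_Gfun {a1 a2 g1 g2 d : ℂ} {c : ℝ} (hc : 0 < c)
    (ha1 : a1 ∈ shiftedHalfPlane d (2 * c)) (ha2 : a2 ∈ shiftedHalfPlane d (2 * c))
    (hg1 : g1 ∈ shiftedHalfPlane d (2 * c)) (hg2 : g2 ∈ shiftedHalfPlane d (2 * c)) :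
    deriv (fun b => Gfun a1 a2 b g1 g2 d) d =
      (logDeriv riemannZeta (1 + a1 + d) - logDeriv riemannZeta (1 + g1 + d) -
        logDeriv riemannZeta (1 + g2 + d)) + logDeriv riemannZeta (1 + a2 + d) +
      deriv (fun b => Azeta a1 a2 b g1 g2 d) d := by
  have ha1_pos := re_add_pos_of_mem_shiftedHalfPlane hc ha1
  have ha2_pos := re_add_pos_of_mem_shiftedHalfPlane hc ha2
  have hg1_pos := re_add_pos_of_mem_shiftedHalfPlane hc hg1
  have hg2_pos := re_add_pos_of_mem_shiftedHalfPlane hc hg2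
  have hY := hasDerivAt_Yfactor ha1_pos ha2_pos hg1_pos hg2_pos
  have hA := (differentiableAt_Azeta hc ha1 hg1 hg2 ha2).hasDerivAt
  refine (hY.fun_mul hA).deriv.trans ?_
  rw [Yfactor_self ha1_pos ha2_pos hg1_pos hg2_pos,
    Azeta_self ha1_pos.le ha2_pos.le hg1_pos.le hg2_pos.le]
  ring

theorem stmt_9_general {a1 a2 g1 g2 d : ℂ} (ha1 : 0 < (a1 + d).re) (ha2 : 0 < (a2 + d).re)
    (hg1 : 0 < (g1 + d).re) (hg2 : 0 < (g2 + d).re) :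
    deriv (fun x1 => deriv (fun x2 => deriv (fun y => Gfun x1 x2 y g1 g2 d) d) a2) a1 =
      deriv (fun x1 => deriv (fun x2 => deriv (fun y => Azeta x1 x2 y g1 g2 d) d) a2) a1 := by
  obtain ⟨c, hc, hmem⟩ := exists_pos_mem_shiftedHalfPlane (d := d) (s := {a1, a2, g1, g2})
    (by
      simp only [Finset.mem_insert, Finset.mem_singleton]
      rintro z (rfl | rfl | rfl | rfl) <;> assumption)
  have hg1' := hmem g1 (by simp)
  have hg2' := hmem g2 (by simp)
  have hnhds {z : ℂ} (hz : z ∈ shiftedHalfPlane d (2 * c)) :=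
    (isOpen_shiftedHalfPlane d (2 * c)).mem_nhds hz
  have ha1_nhds := hnhds (hmem a1 (by simp))
  have ha2_nhds := hnhds (hmem a2 (by simp))
  have hG := eventually_of_mem ha1_nhds fun x1 hx1 => eventually_of_mem ha2_nhds fun x2 hx2 =>
    deriv_Gfun hc hx1 hx2 hg1' hg2'
  have hA := eventually_of_mem ha1_nhds fun x1 hx1 =>
    (differentiableOn_deriv_Azeta hc hx1 hg1' hg2').differentiableAt ha2_nhds
  exact deriv_deriv_eq_of_eventually_eq_add hG
    (differentiableAt_logDeriv_riemannZeta_one_add ha2) hA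

/-- The triple mixed partial derivative `(∂/∂α1)(∂/∂α2)(∂/∂β)` of `G = Y·A_ζ`, evaluated at
`γ1 = α1`, `γ2 = α2`, `δ = β`, equals the corresponding triple mixed partial derivative of
`A_ζ`: all contributions from derivatives of `Y` cancel on the diagonal. -/
theorem stmt_9 (a1 a2 b : ℂ)
    (h1 : 0 < a1.re) (h1' : a1.re < 1 / 8) (h2 : 0 < a2.re) (h2' : a2.re < 1 / 8)
    (h3 : 0 < b.re) (h3' : b.re < 1 / 8)
    (h4 : a1 + b ≠ 0) (h5 : a2 + b ≠ 0) (h6 : a1 - a2 ≠ 0) :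
    deriv (fun x1 : ℂ =>
        deriv (fun x2 : ℂ => deriv (fun y : ℂ => Gfun x1 x2 y a1 a2 b) b) a2) a1 =
      deriv (fun x1 : ℂ =>
        deriv (fun x2 : ℂ => deriv (fun y : ℂ => Azeta x1 x2 y a1 a2 b) b) a2) a1 :=
  have ha1 : 0 < (a1 + b).re := add_re a1 b ▸ add_pos h1 h3
  have ha2 : 0 < (a2 + b).re := add_re a2 b ▸ add_pos h2 h3
  stmt_9_general ha1 ha2 ha1 ha2

end
end

section
/- Let α, β be complex numbers with Re α > 0 and Re β > 0. Then e^{−α−β} ∫_{U(N)} (Λ_X'/Λ_X)(e^{−α}) · (Λ_{X*}'/Λ_{X*})(e^{−β}) dX = (z'/z)'(α+β) + e^{−N(α+β)} z(α+β) z(−α−β), where the integral is over the unitary group U(N) with Haar probability measure. -/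
open Complex Matrix MeasureTheory

noncomputable section

instance matrixMeasurableSpace (N : ℕ) : MeasurableSpace (Matrix (Fin N) (Fin N) ℂ) :=
  (inferInstance : MeasurableSpace (Fin N → Fin N → ℂ))

/-- The characteristic polynomial `Λ_X(s) = det(I − s X*)` of a unitary matrix `X`. -/
def Lam {N : ℕ} (X : Matrix.unitaryGroup (Fin N) ℂ) (s : ℂ) : ℂ :=
  Matrix.det ((1 : Matrix (Fin N) (Fin N) ℂ) - s • (X : Matrix (Fin N) (Fin N) ℂ)ᴴ)

/-- The characteristic polynomial of `X*`: `Λ_{X*}(s) = det(I − s X)`. -/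
def LamStar {N : ℕ} (X : Matrix.unitaryGroup (Fin N) ℂ) (s : ℂ) : ℂ :=
  Matrix.det ((1 : Matrix (Fin N) (Fin N) ℂ) - s • (X : Matrix (Fin N) (Fin N) ℂ))

/-- `z(x) = 1/(1 − e^{−x})`. -/
def zf (x : ℂ) : ℂ := (1 - Complex.exp (-x))⁻¹

/-- The logarithmic derivative `z'/z`. -/
def zl (x : ℂ) : ℂ := deriv zf x / zf x

/-!
Expanding both logarithmic derivatives in geometric series reduces the integral to the moments
`∫ tr X^j tr X*^k dX`, which vanish for `j ≠ k` and equal `min k N` for `j = k`. The moments are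
computed without representation theory, from two facts only: the infinitesimal left translations
`X ↦ A X` act on polynomials in the entries of `X` and `X*` as derivations, and Haar measure kills
every such derivative. Applied to the adjugate of `1 - t X`, whose divergence along these
derivations is `-t` times the `t`-derivative of its trace, this gives linear recursions for the
moments, and they determine them.
-/

section Derivation

variable {k S n : Type*} [CommRing k] [CommRing S] [Algebra k S] (D : Derivation k S S)

lemma map_derivation_smul (c : S) (M : Matrix n n S) :
    (c • M).map D = D c • M + c • M.map D := by
  ext i j
  simp [mul_comm, add_comm]

lemma map_derivation_one [DecidableEq n] : (1 : Matrix n n S).map D = 0 := by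
  ext i j
  simp [one_apply, apply_ite D]

lemma derivation_finset_prod {ι : Type*} [DecidableEq ι] (s : Finset ι) (f : ι → S) :
    D (∏ i ∈ s, f i) = ∑ i ∈ s, (∏ j ∈ s.erase i, f j) * D (f i) := by
  induction s using Finset.induction_on with
  | empty => simp
  | insert a s ha ih =>
    rw [Finset.prod_insert ha, D.leibniz, ih, Finset.sum_insert ha, Finset.erase_insert ha,
      smul_eq_mul, smul_eq_mul, Finset.mul_sum, add_comm]
    congr 1
    refine Finset.sum_congr rfl fun i hi => ?_
    rw [Finset.erase_insert_of_ne (ne_of_mem_of_not_mem hi ha).symm,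
      Finset.prod_insert (by simp [ha]), mul_assoc]

variable [Fintype n]

lemma map_derivation_mul (M M' : Matrix n n S) :
    (M * M').map D = M.map D * M' + M * M'.map D := by
  ext i j
  simp [mul_apply, Finset.sum_add_distrib, mul_comm, add_comm]

lemma derivation_trace (M : Matrix n n S) : D M.trace = (M.map D).trace := by
  simp [trace]

variable [DecidableEq n]

lemma trace_mul_map_derivation_pow (M : Matrix n n S) (a : ℕ) {K : Matrix n n S}
    (hK : Commute K M) :
    (K * (M ^ (a + 1)).map D).trace = (a + 1) * (K * M ^ a * M.map D).trace := by
  induction a generalizing K with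
  | zero => simp
  | succ a ih =>
    have hcycle : (K * ((M ^ (a + 1)).map D * M)).trace = (M * K * (M ^ (a + 1)).map D).trace := by
      rw [← mul_assoc, trace_mul_comm, mul_assoc]
    rw [pow_succ _ (a + 1), map_derivation_mul, mul_add, trace_add, hcycle,
      ih ((Commute.refl M).mul_left hK), ← hK.eq, mul_assoc K M, ← pow_succ', ← mul_assoc]
    push_cast
    ring

lemma derivation_trace_pow (M : Matrix n n S) (a : ℕ) :
    D (M ^ a).trace = a * (M ^ (a - 1) * M.map D).trace := by
  cases a with
  | zero => simp [trace_one]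
  | succ a =>
    simpa [derivation_trace] using trace_mul_map_derivation_pow D M a (Commute.one_left M)

lemma derivation_det (M : Matrix n n S) : D M.det = (M.adjugate * M.map D).trace := by
  have hdiag (i : n) :
      (M.adjugate * M.map D) i i = (M.updateCol i fun l => D (M l i)).det := by
    rw [← cramer_apply, cramer_eq_adjugate_mulVec]
    rfl
  simp only [trace, diag, hdiag, det_apply, map_sum]
  rw [Finset.sum_comm]
  refine Finset.sum_congr rfl fun τ _ => ?_
  rw [← Finset.smul_sum, D.map_smul_of_tower, derivation_finset_prod]
  congr 1
  refine Finset.sum_congr rfl fun i _ => ?_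
  rw [← Finset.mul_prod_erase _ _ (Finset.mem_univ i), mul_comm, updateCol_self]
  congr 1
  refine Finset.prod_congr rfl fun j hj => ?_
  rw [updateCol_ne (Finset.ne_of_mem_erase hj)]

lemma det_smul_map_derivation_adjugate (M : Matrix n n S) :
    M.det • M.adjugate.map D = D M.det • M.adjugate - M.adjugate * M.map D * M.adjugate := by
  have hmul := congrArg (fun A => M.adjugate * A.map D) M.mul_adjugate
  simp only [map_derivation_mul, map_derivation_smul, map_derivation_one, smul_zero, add_zero,
    mul_add, ← mul_assoc, adjugate_mul, smul_mul_assoc, one_mul, mul_smul_comm, mul_one] at hmul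
  rw [← hmul, add_sub_cancel_left]

end Derivation

section CoeffwiseDerivation

open Polynomial

variable {k R n : Type*} [CommRing k] [CommRing R] [Algebra k R]

/-- The derivation of `R[X]` that applies a derivation of `R` to every coefficient. -/
def coeffwiseDerivation (D : Derivation k R R) : Derivation k R[X] R[X] :=
  PolynomialModule.equivPolynomialSelf.compDer D.mapCoeffs

variable (D : Derivation k R R)

lemma coeff_coeffwiseDerivation (f : R[X]) (b : ℕ) :
    (coeffwiseDerivation D f).coeff b = D (f.coeff b) := rfl

lemma coeffwiseDerivation_X : coeffwiseDerivation D X = 0 := by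
  simp [coeffwiseDerivation]

lemma coeffwiseDerivation_C (x : R) : coeffwiseDerivation D (C x) = C (D x) := by
  ext b
  rw [coeff_coeffwiseDerivation, coeff_C, coeff_C, apply_ite D, map_zero]

lemma map_coeffwiseDerivation_one_sub_X_smul [DecidableEq n] (U : Matrix n n R) :
    (1 - (X : R[X]) • U.map C).map (coeffwiseDerivation D) = -((X : R[X]) • (U.map D).map C) := by
  ext1 i j
  simp [one_apply, apply_ite, coeffwiseDerivation_X, coeffwiseDerivation_C]

lemma map_derivative'_one_sub_X_smul [DecidableEq n] (U : Matrix n n R) :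
    (1 - (X : R[X]) • U.map C).map (derivative' (R := R)) = -U.map C := by
  ext1 i j
  by_cases h : i = j <;> simp [one_apply, derivative', h]

lemma map_coeff_mul_C [Fintype n] (U : Matrix n n R) (M : Matrix n n R[X]) (b : ℕ) :
    (M * U.map C).map (fun f => f.coeff b) = (M.map fun f => f.coeff b) * U := by
  ext i j
  simp [mul_apply, finsetSum_coeff]

end CoeffwiseDerivation

section RevAdjugate

open Polynomial

variable {k R n : Type*} [CommRing k] [CommRing R] [Algebra k R] [Fintype n] [DecidableEq n]
  (U : Matrix n n R)

/-- The adjugate of `1 - t U`, a matrix of polynomials in `t`; it plays for the adjugate the role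
that `Matrix.charpolyRev` plays for the determinant. -/
def revAdjugate : Matrix n n R[X] :=
  (1 - (X : R[X]) • U.map C).adjugate

/-- The coefficient of `t ^ b` in the adjugate of `1 - t U`. -/
def revAdjugateCoeff (b : ℕ) : Matrix n n R :=
  (revAdjugate U).map fun f => f.coeff b

lemma revAdjugate_mul_one_sub_X_smul :
    revAdjugate U * (1 - (X : R[X]) • U.map C) = U.charpolyRev • 1 :=
  adjugate_mul _

lemma coeff_charpolyRev_zero : U.charpolyRev.coeff 0 = 1 := by
  rw [coeff_zero_eq_eval_zero, eval_charpolyRev]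

lemma coeff_charpolyRev_eq_zero_of_card_lt {b : ℕ} (hb : Fintype.card n < b) :
    U.charpolyRev.coeff b = 0 := by
  nontriviality R
  rw [← reverse_charpoly]
  refine coeff_eq_zero_of_natDegree_lt ((reverse_natDegree_le _).trans_lt ?_)
  simpa using hb

lemma revAdjugate_eq_add_X_smul_mul :
    revAdjugate U = U.charpolyRev • 1 + (X : R[X]) • (revAdjugate U * U.map C) := by
  rw [← revAdjugate_mul_one_sub_X_smul, mul_sub, mul_one, mul_smul_comm, sub_add_cancel]

lemma revAdjugateCoeff_zero : revAdjugateCoeff U 0 = 1 := by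
  rw [revAdjugateCoeff, revAdjugate_eq_add_X_smul_mul]
  ext i j
  by_cases h : i = j <;> simp [h, one_apply, coeff_charpolyRev_zero]

lemma revAdjugateCoeff_succ (b : ℕ) :
    revAdjugateCoeff U (b + 1) =
      U.charpolyRev.coeff (b + 1) • 1 + revAdjugateCoeff U b * U := by
  rw [revAdjugateCoeff, revAdjugate_eq_add_X_smul_mul, revAdjugateCoeff, ← map_coeff_mul_C]
  ext i j
  by_cases h : i = j <;> simp [h]

lemma derivative_charpolyRev :
    derivative U.charpolyRev = -(revAdjugate U * U.map C).trace := by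
  have h := derivation_det (derivative' (R := R)) (1 - (X : R[X]) • U.map C)
  rwa [map_derivative'_one_sub_X_smul, mul_neg, trace_neg] at h

lemma trace_revAdjugateCoeff_mul (b : ℕ) :
    (revAdjugateCoeff U b * U).trace = -((b + 1) * U.charpolyRev.coeff (b + 1)) := by
  have h := congrArg (coeff · b) (derivative_charpolyRev U)
  rw [revAdjugateCoeff, ← map_coeff_mul_C]
  simp only [coeff_derivative, coeff_neg, trace, diag, finsetSum_coeff] at h
  simp only [trace, diag, map_apply]
  rw [mul_comm, h, neg_neg]

lemma trace_revAdjugateCoeff (b : ℕ) :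
    (revAdjugateCoeff U b).trace = (Fintype.card n - b) * U.charpolyRev.coeff b := by
  cases b with
  | zero => simp [revAdjugateCoeff_zero, coeff_charpolyRev_zero]
  | succ b =>
    rw [revAdjugateCoeff_succ, trace_add, trace_revAdjugateCoeff_mul]
    simp
    ring

lemma charpolyRev_smul_map_derivative_revAdjugate :
    U.charpolyRev • (revAdjugate U).map derivative =
      derivative U.charpolyRev • revAdjugate U + revAdjugate U * U.map C * revAdjugate U := by
  have h := det_smul_map_derivation_adjugate (derivative' (R := R)) (1 - (X : R[X]) • U.map C)
  rwa [map_derivative'_one_sub_X_smul, mul_neg, neg_mul, sub_neg_eq_add] at h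

variable {U}

lemma coeffwiseDerivation_charpolyRev {D : Derivation k R R} {A : Matrix n n R}
    (hU : U.map D = A * U) :
    coeffwiseDerivation D U.charpolyRev = -(X * (revAdjugate U * A.map C * U.map C).trace) := by
  have h := derivation_det (coeffwiseDerivation D) (1 - (X : R[X]) • U.map C)
  rw [map_coeffwiseDerivation_one_sub_X_smul, hU, Matrix.map_mul] at h
  rw [charpolyRev, h, mul_neg, trace_neg, mul_smul_comm, trace_smul, smul_eq_mul, ← mul_assoc]
  rfl

lemma charpolyRev_smul_map_coeffwiseDerivation_revAdjugate {D : Derivation k R R}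
    {A : Matrix n n R} (hU : U.map D = A * U) :
    U.charpolyRev • (revAdjugate U).map (coeffwiseDerivation D) =
      coeffwiseDerivation D U.charpolyRev • revAdjugate U +
        (X : R[X]) • (revAdjugate U * A.map C * U.map C * revAdjugate U) := by
  have h := det_smul_map_derivation_adjugate (coeffwiseDerivation D) (1 - (X : R[X]) • U.map C)
  rw [map_coeffwiseDerivation_one_sub_X_smul, hU, Matrix.map_mul] at h
  rw [charpolyRev, revAdjugate, h, mul_neg, neg_mul, sub_neg_eq_add, mul_smul_comm, smul_mul_assoc,
    ← mul_assoc]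

lemma trace_mul_single_mul (A B : Matrix n n R) (i j : n) :
    (A * single i j 1 * B).trace = (B * A) j i := by
  rw [trace_mul_comm, ← mul_assoc, trace_mul_single, MulOpposite.op_one, one_smul]

lemma mul_single_mul_apply (A B : Matrix n n R) (i j p q : n) :
    (A * single i j (1 : R) * B : Matrix n n R) p q = A p i * B j q := by
  rw [mul_apply, Finset.sum_eq_single j, mul_single_apply_same, mul_one]
  · intro l _ hl
    rw [mul_single_apply_of_ne (hbj := hl), zero_mul]
  · simp

lemma charpolyRev_mul_derivative_trace_revAdjugate :
    U.charpolyRev * derivative (revAdjugate U).trace =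
      (revAdjugate U * (U.map C * revAdjugate U)).trace -
        (revAdjugate U).trace * (U.map C * revAdjugate U).trace := by
  have htrace : derivative (revAdjugate U).trace = ((revAdjugate U).map derivative).trace := by
    simp [trace]
  rw [htrace, ← smul_eq_mul, ← trace_smul, charpolyRev_smul_map_derivative_revAdjugate,
    derivative_charpolyRev, trace_add, trace_smul, trace_mul_comm (revAdjugate U) (U.map C),
    mul_assoc, smul_eq_mul]
  ring

lemma charpolyRev_mul_coeffwiseDerivation_revAdjugate_apply {D : Derivation k R R} {i j : n}
    (hU : U.map D = single i j 1 * U) :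
    U.charpolyRev * coeffwiseDerivation D (revAdjugate U i j) =
      X * (revAdjugate U i i * (U.map C * revAdjugate U) j j) -
        X * (revAdjugate U i j * (U.map C * revAdjugate U) j i) := by
  have hsingle : (single i j (1 : R)).map C = single i j 1 := by simp
  have h := congrFun₂ (charpolyRev_smul_map_coeffwiseDerivation_revAdjugate hU) i j
  rw [coeffwiseDerivation_charpolyRev hU, hsingle, trace_mul_single_mul, Matrix.add_apply,
    Matrix.smul_apply, Matrix.smul_apply, Matrix.smul_apply, map_apply,
    mul_assoc _ (U.map C) (revAdjugate U), mul_single_mul_apply] at h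
  simp only [smul_eq_mul] at h
  rw [h]
  ring

variable {D : n → n → Derivation k R R}

/-- After multiplication by `E = charpolyRev U` both sides equal
`t (tr B tr (U B) - tr (B U B))`, where `B = revAdjugate U`. -/
lemma sum_coeffwiseDerivation_revAdjugate (hU : ∀ i j, U.map (D i j) = single i j 1 * U) :
    ∑ i, ∑ j, coeffwiseDerivation (D i j) (revAdjugate U i j) =
      -(X * derivative (revAdjugate U).trace) := by
  have hE : U.charpolyRev ∈ nonZeroDivisors R[X] :=
    mem_nonzeroDivisors_of_coeff_mem 0 (by simp [coeff_charpolyRev_zero])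
  refine (mul_cancel_left_mem_nonZeroDivisors hE).mp ?_
  rw [mul_neg, mul_left_comm, charpolyRev_mul_derivative_trace_revAdjugate]
  simp only [Finset.mul_sum, charpolyRev_mul_coeffwiseDerivation_revAdjugate_apply (hU _ _)]
  generalize U.map C * revAdjugate U = Q
  simp only [trace, diag, mul_apply, Finset.sum_mul_sum, Finset.sum_sub_distrib, ← Finset.mul_sum]
  ring

lemma sum_derivation_revAdjugateCoeff (hU : ∀ i j, U.map (D i j) = single i j 1 * U) (b : ℕ) :
    ∑ i, ∑ j, D i j (revAdjugateCoeff U b i j) =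
      -(b * ((Fintype.card n - b) * U.charpolyRev.coeff b)) := by
  have hX : (X * derivative (revAdjugate U).trace).coeff b = b * (revAdjugateCoeff U b).trace := by
    cases b with
    | zero => simp
    | succ b =>
      simp [coeff_X_mul, coeff_derivative, trace, revAdjugateCoeff, mul_comm, Finset.mul_sum]
  rw [← trace_revAdjugateCoeff, ← hX, ← coeff_neg, ← sum_coeffwiseDerivation_revAdjugate hU]
  simp only [finsetSum_coeff, coeff_coeffwiseDerivation]
  rfl

end RevAdjugate

section SchwingerDyson

variable {K R n : Type*} [CommRing K] [CommRing R] [Algebra K R] [Fintype n] [DecidableEq n]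

/-- A linear functional `φ` on an algebra containing the entries of two matrices `U` and `V`
satisfies the Schwinger-Dyson equations if it is normalized, treats `V` as the inverse of `U`, and
annihilates the image of every derivation `D i j`, where `D i j` is the infinitesimal left
translation by the matrix unit `single i j 1`. This is the algebraic form of integration over the
unitary group with respect to Haar measure, with `U = X` and `V = X*`. -/
structure IsSchwingerDyson (D : n → n → Derivation K R R) (U V : Matrix n n R)
    (φ : R →ₗ[K] K) : Prop where
  map_one : φ 1 = 1
  map_derivation (i j : n) (f : R) : φ (D i j f) = 0
  map_left (i j : n) : U.map (D i j) = single i j 1 * U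
  map_right (i j : n) : V.map (D i j) = -(V * single i j 1)
  map_mul_apply (f : R) (i j : n) : φ (f * (U * V) i j) = φ (f * (1 : Matrix n n R) i j)

lemma map_natCast_mul (φ : R →ₗ[K] K) (m : ℕ) (f : R) : φ (m * f) = m * φ f := by
  rw [← nsmul_eq_mul, map_nsmul, nsmul_eq_mul]

section Gradient

variable {D : Derivation K R R} {U V : Matrix n n R} {i j : n}

lemma derivation_trace_pow_of_map_eq_single_mul (hU : U.map D = single i j 1 * U) (a : ℕ) :
    D (U ^ a).trace = a * (U ^ a) j i := by
  cases a with
  | zero => simp [trace_one]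
  | succ a =>
    rw [derivation_trace_pow, hU, ← mul_assoc, trace_mul_single_mul, Nat.add_sub_cancel, pow_succ']

lemma derivation_trace_pow_of_map_eq_neg_mul_single (hV : V.map D = -(V * single i j 1))
    (a : ℕ) : D (V ^ a).trace = -(a * (V ^ a) j i) := by
  cases a with
  | zero => simp [trace_one]
  | succ a =>
    have hsingle := trace_mul_single_mul (V ^ (a + 1)) 1 i j
    rw [mul_one, one_mul] at hsingle
    rw [derivation_trace_pow, hV, mul_neg, trace_neg, mul_neg, ← mul_assoc, Nat.add_sub_cancel,
      ← pow_succ, hsingle]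

end Gradient

namespace IsSchwingerDyson

variable {D : n → n → Derivation K R R} {U V : Matrix n n R} {φ : R →ₗ[K] K}

lemma sum_mul_derivation_trace_left_pow (h : IsSchwingerDyson D U V φ) (Z : Matrix n n R)
    (a : ℕ) : ∑ i, ∑ j, Z i j * D i j (U ^ a).trace = a * (Z * U ^ a).trace := by
  simp only [derivation_trace_pow_of_map_eq_single_mul (h.map_left _ _)]
  simp only [trace, diag, Matrix.mul_apply, Finset.mul_sum, mul_left_comm (Z _ _)]

lemma sum_mul_derivation_trace_right_pow (h : IsSchwingerDyson D U V φ) (Z : Matrix n n R)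
    (m : ℕ) : ∑ i, ∑ j, Z i j * D i j (V ^ m).trace = -(m * (Z * V ^ m).trace) := by
  simp only [derivation_trace_pow_of_map_eq_neg_mul_single (h.map_right _ _), mul_neg,
    Finset.sum_neg_distrib]
  simp only [trace, diag, Matrix.mul_apply, Finset.mul_sum, mul_left_comm (Z _ _)]

lemma sum_mul_derivation_trace_pow_mul_trace_pow (h : IsSchwingerDyson D U V φ)
    (Z : Matrix n n R) (a m : ℕ) :
    ∑ i, ∑ j, Z i j * D i j ((U ^ a).trace * (V ^ m).trace) =
      a * ((Z * U ^ a).trace * (V ^ m).trace) - m * ((U ^ a).trace * (Z * V ^ m).trace) := by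
  simp only [Derivation.leibniz, smul_eq_mul, mul_add, Finset.sum_add_distrib,
    mul_left_comm (Z _ _), ← Finset.mul_sum, h.sum_mul_derivation_trace_left_pow,
    h.sum_mul_derivation_trace_right_pow]
  ring

lemma map_sum_mul_derivation (h : IsSchwingerDyson D U V φ) (Z : Matrix n n R) (f : R) :
    φ (∑ i, ∑ j, Z i j * D i j f) = -φ ((∑ i, ∑ j, D i j (Z i j)) * f) := by
  have htotal : φ (∑ i, ∑ j, D i j (Z i j * f)) = 0 := by
    simp only [map_sum, h.map_derivation, Finset.sum_const_zero]
  simp only [Derivation.leibniz, smul_eq_mul, Finset.sum_add_distrib, map_add] at htotal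
  rw [eq_neg_iff_add_eq_zero, ← htotal]
  simp only [mul_comm _ f, Finset.mul_sum]

lemma map_sum_revAdjugateCoeff_mul_derivation (h : IsSchwingerDyson D U V φ) (b : ℕ) (f : R) :
    φ (∑ i, ∑ j, revAdjugateCoeff U b i j * D i j f) =
      b * (Fintype.card n - b) * φ (U.charpolyRev.coeff b * f) := by
  rw [h.map_sum_mul_derivation, sum_derivation_revAdjugateCoeff h.map_left, neg_mul, map_neg,
    neg_neg, mul_assoc, mul_assoc, map_natCast_mul, sub_mul, map_sub, map_natCast_mul,
    map_natCast_mul]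
  ring

lemma mul_map_trace_sub_mul_map_trace (h : IsSchwingerDyson D U V φ) (b a m : ℕ) :
    a * φ ((revAdjugateCoeff U b * U ^ a).trace * (V ^ m).trace) -
        m * φ ((U ^ a).trace * (revAdjugateCoeff U b * V ^ m).trace) =
      b * (Fintype.card n - b) *
        φ (U.charpolyRev.coeff b * ((U ^ a).trace * (V ^ m).trace)) := by
  rw [← h.map_sum_revAdjugateCoeff_mul_derivation, h.sum_mul_derivation_trace_pow_mul_trace_pow,
    map_sub, map_natCast_mul, map_natCast_mul]

lemma map_mul_trace_mul_mul (h : IsSchwingerDyson D U V φ) (f : R) (A C : Matrix n n R) :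
    φ (f * (A * (U * V) * C).trace) = φ (f * (A * C).trace) := by
  have htrace (Y : Matrix n n R) :
      f * (A * Y * C).trace = ∑ i, ∑ j, f * (C * A) i j * Y j i := by
    rw [trace_mul_comm, ← mul_assoc]
    simp only [trace, diag, Matrix.mul_apply (N := Y), Finset.mul_sum, mul_assoc f]
  rw [htrace, ← mul_one A, htrace]
  simp only [map_sum, h.map_mul_apply, mul_one]

lemma map_mul_trace_revAdjugateCoeff_succ (h : IsSchwingerDyson D U V φ) (f : R) (b m : ℕ) :
    φ (f * (revAdjugateCoeff U (b + 1) * V ^ (m + 1)).trace) =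
      φ (f * (U.charpolyRev.coeff (b + 1) * (V ^ (m + 1)).trace)) +
        φ (f * (revAdjugateCoeff U b * V ^ m).trace) := by
  rw [revAdjugateCoeff_succ, add_mul, smul_mul_assoc, one_mul, trace_add, trace_smul, mul_add,
    map_add, smul_eq_mul, pow_succ' V m, ← mul_assoc (_ * U), mul_assoc _ U V,
    h.map_mul_trace_mul_mul]

lemma map_trace_revAdjugateCoeff_mul_pow_succ (h : IsSchwingerDyson D U V φ) (b : ℕ) :
    φ (revAdjugateCoeff U (b + 1) * V ^ (b + 1)).trace =
      φ (U.charpolyRev.coeff (b + 1) * (V ^ (b + 1)).trace) +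
        φ (revAdjugateCoeff U b * V ^ b).trace := by
  simpa only [one_mul] using h.map_mul_trace_revAdjugateCoeff_succ 1 b b

end IsSchwingerDyson

end SchwingerDyson

section TraceMoments

variable {K R n : Type*} [Field K] [CharZero K] [CommRing R] [Algebra K R] [Fintype n]
  [DecidableEq n] {D : n → n → Derivation K R R} {U V : Matrix n n R} {φ : R →ₗ[K] K}

namespace IsSchwingerDyson

lemma map_trace_pow_mul_trace_pow_of_ne (h : IsSchwingerDyson D U V φ) {a m : ℕ} (ham : a ≠ m) :
    φ ((U ^ a).trace * (V ^ m).trace) = 0 := by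
  have hsum := h.map_sum_mul_derivation 1 ((U ^ a).trace * (V ^ m).trace)
  have hone (i j : n) : D i j ((1 : Matrix n n R) i j) = 0 :=
    congrFun₂ (map_derivation_one (D i j)) i j
  rw [h.sum_mul_derivation_trace_pow_mul_trace_pow, one_mul, one_mul, map_sub, map_natCast_mul,
    map_natCast_mul, ← sub_mul] at hsum
  simp only [hone, Finset.sum_const_zero, zero_mul, map_zero, neg_zero] at hsum
  exact (mul_eq_zero.mp hsum).resolve_left (sub_ne_zero.mpr (Nat.cast_injective.ne ham))

lemma map_trace_revAdjugateCoeff_mul_pow_eq_mul (h : IsSchwingerDyson D U V φ) (b : ℕ) :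
    φ (revAdjugateCoeff U b * V ^ b).trace =
      (b - Fintype.card n) * φ (U.charpolyRev.coeff (b + 1) * (V ^ (b + 1)).trace) := by
  have hb : ((b + 1 : ℕ) : K) ≠ 0 := Nat.cast_ne_zero.mpr b.succ_ne_zero
  have hsum := h.map_sum_revAdjugateCoeff_mul_derivation (b + 1) (V ^ (b + 1)).trace
  rw [h.sum_mul_derivation_trace_right_pow, map_neg, map_natCast_mul, mul_assoc, ← mul_neg,
    mul_right_inj' hb, h.map_trace_revAdjugateCoeff_mul_pow_succ] at hsum
  push_cast at hsum
  linear_combination -hsum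

lemma map_trace_revAdjugateCoeff_mul_pow (h : IsSchwingerDyson D U V φ) (b : ℕ) :
    φ (revAdjugateCoeff U b * V ^ b).trace = (Fintype.card n - b : ℕ) := by
  induction b with
  | zero =>
    have hcard := map_natCast_mul φ (Fintype.card n) 1
    rw [mul_one, h.map_one, mul_one] at hcard
    rw [revAdjugateCoeff_zero, pow_zero, one_mul, trace_one, hcard, Nat.sub_zero]
  | succ b ih =>
    have hrec := h.map_trace_revAdjugateCoeff_mul_pow_eq_mul b
    rw [h.map_trace_revAdjugateCoeff_mul_pow_succ, ih]
    rcases lt_or_ge b (Fintype.card n) with hb | hb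
    · have hne : (b : K) - Fintype.card n ≠ 0 := sub_ne_zero.mpr (Nat.cast_injective.ne hb.ne)
      rw [ih, Nat.cast_sub hb.le] at hrec
      rw [Nat.cast_sub hb.le, Nat.cast_sub hb, ← mul_right_inj' hne]
      push_cast
      linear_combination -hrec
    · rw [coeff_charpolyRev_eq_zero_of_card_lt U (by lia), zero_mul, map_zero, zero_add,
        Nat.sub_eq_zero_of_le hb, Nat.sub_eq_zero_of_le (by lia)]

end IsSchwingerDyson

/-- The recursions satisfied by the moments `u b a = φ(tr (B_b U ^ a) q_{a + b})`,
`v b a = φ(p_a tr (B_b V ^ (a + b)))` and `d b a = φ(e_b p_a q_{a + b})`, where `p` and `q` are the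
power traces of `U` and `V`, and `B_b` and `e_b` are the coefficients of `revAdjugate U` and
`U.charpolyRev`. -/
structure IsTraceMomentSystem (N : ℕ) (u v d : ℕ → ℕ → K) : Prop where
  left_zero (a : ℕ) : u 0 a = d 0 a
  right_zero (a : ℕ) : v 0 a = d 0 a
  left_succ (b a : ℕ) : u (b + 1) a = d (b + 1) a + u b (a + 1)
  right_succ (b a : ℕ) : v (b + 1) a = d (b + 1) a + v b a
  schwingerDyson (b a : ℕ) : a * u b a - (a + b : ℕ) * v b a = b * (N - b) * d b a
  eq_zero_of_lt {b : ℕ} (a : ℕ) (hb : N < b) : d b a = 0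
  left_one (b : ℕ) : u b 1 = (b + 1) * ((N - b : ℕ) - (N - (b + 1) : ℕ))

namespace IsTraceMomentSystem

variable {N : ℕ} {u v d : ℕ → ℕ → K}

lemma left_one_eq_ite (h : IsTraceMomentSystem N u v d) (b : ℕ) :
    u b 1 = (if 1 + b ≤ N then 1 + b else N - b : ℕ) := by
  rw [h.left_one]
  split_ifs with hb
  · obtain ⟨c, rfl⟩ := Nat.exists_eq_add_of_le hb
    rw [show 1 + b + c - b = c + 1 by lia, show 1 + b + c - (b + 1) = c by lia]
    push_cast
    ring
  · rw [Nat.sub_eq_zero_of_le (by lia), Nat.sub_eq_zero_of_le (by lia)]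
    simp

lemma right_eq_min_of_left (h : IsTraceMomentSystem N u v d) {a : ℕ} (ha : 1 ≤ a)
    (hu : ∀ b, u b a = (if a + b ≤ N then a + b else N - b : ℕ)) (b : ℕ) :
    v b a = (min a (N - b) : ℕ) := by
  induction b with
  | zero =>
    rw [h.right_zero, ← h.left_zero, hu]
    split_ifs with hN
    · rw [add_zero, Nat.sub_zero, min_eq_left (by lia)]
    · rw [Nat.sub_zero, min_eq_right (by lia)]
  | succ b ih =>
    rcases lt_or_ge b N with hb | hb
    · obtain ⟨c, rfl⟩ := Nat.exists_eq_add_of_lt hb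
      have hsd := h.schwingerDyson (b + 1) a
      rw [hu, h.right_succ, ih] at hsd
      rw [h.right_succ, ih]
      have hne : ((b + 1) * c + (a + b + 1) : K) ≠ 0 := by
        exact_mod_cast (by positivity : (b + 1) * c + (a + b + 1) ≠ 0)
      rw [← mul_right_inj' hne]
      rw [show b + c + 1 - b = c + 1 by lia, show b + c + 1 - (b + 1) = c by lia] at *
      rcases le_or_gt a c with hac | hac
      · rw [if_pos (by lia), min_eq_left (by lia)] at hsd
        rw [min_eq_left (by lia), min_eq_left hac]
        push_cast at hsd ⊢
        linear_combination -hsd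
      · rw [if_neg (by lia), min_eq_right (by lia)] at hsd
        rw [min_eq_right (by lia), min_eq_right hac.le]
        push_cast at hsd ⊢
        linear_combination -hsd
    · rw [h.right_succ, h.eq_zero_of_lt a (by lia), ih, zero_add, Nat.sub_eq_zero_of_le hb,
        Nat.sub_eq_zero_of_le (by lia)]

lemma left_eq_ite (h : IsTraceMomentSystem N u v d) {a : ℕ} (ha : 1 ≤ a) (b : ℕ) :
    u b a = (if a + b ≤ N then a + b else N - b : ℕ) := by
  induction a, ha using Nat.le_induction generalizing b with
  | base => exact h.left_one_eq_ite b
  | succ a ha ih =>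
    have hv := h.right_eq_min_of_left ha ih
    have hrec : u b (a + 1) = u (b + 1) a - v (b + 1) a + v b a := by
      rw [h.left_succ, h.right_succ]
      ring
    rw [hrec, ih, hv, hv, sub_add_eq_add_sub, sub_eq_iff_eq_add]
    norm_cast
    split_ifs <;> lia

lemma right_zero_eq_min (h : IsTraceMomentSystem N u v d) {a : ℕ} (ha : 1 ≤ a) :
    v 0 a = (min a N : ℕ) :=
  h.right_eq_min_of_left ha (h.left_eq_ite ha) 0

end IsTraceMomentSystem

namespace IsSchwingerDyson

lemma isTraceMomentSystem (h : IsSchwingerDyson D U V φ) :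
    IsTraceMomentSystem (Fintype.card n)
      (fun b a => φ ((revAdjugateCoeff U b * U ^ a).trace * (V ^ (a + b)).trace))
      (fun b a => φ ((U ^ a).trace * (revAdjugateCoeff U b * V ^ (a + b)).trace))
      (fun b a => φ (U.charpolyRev.coeff b * ((U ^ a).trace * (V ^ (a + b)).trace))) where
  left_zero a := by simp [revAdjugateCoeff_zero, coeff_charpolyRev_zero]
  right_zero a := by simp [revAdjugateCoeff_zero, coeff_charpolyRev_zero]
  left_succ b a := by
    rw [revAdjugateCoeff_succ, add_mul, smul_mul_assoc, one_mul, trace_add, trace_smul, add_mul,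
      map_add, smul_eq_mul, mul_assoc, mul_assoc _ U, ← pow_succ', add_right_comm, add_assoc a b]
  right_succ b a := by
    rw [← add_assoc, h.map_mul_trace_revAdjugateCoeff_succ, mul_left_comm]
  schwingerDyson b a := h.mul_map_trace_sub_mul_map_trace b a (a + b)
  eq_zero_of_lt a hb := by
    rw [coeff_charpolyRev_eq_zero_of_card_lt U hb, zero_mul, map_zero]
  left_one b := by
    have hrec := h.map_trace_revAdjugateCoeff_mul_pow_succ b
    rw [h.map_trace_revAdjugateCoeff_mul_pow, h.map_trace_revAdjugateCoeff_mul_pow] at hrec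
    rw [pow_one, trace_revAdjugateCoeff_mul, neg_mul, map_neg, mul_assoc, ← Nat.cast_add_one,
      map_natCast_mul, add_comm 1 b]
    push_cast
    linear_combination ((b + 1) : K) * hrec

theorem map_trace_pow_mul_trace_pow_self (h : IsSchwingerDyson D U V φ) {a : ℕ} (ha : 1 ≤ a) :
    φ ((U ^ a).trace * (V ^ a).trace) = (min a (Fintype.card n) : ℕ) := by
  simpa [revAdjugateCoeff_zero] using h.isTraceMomentSystem.right_zero_eq_min ha

end IsSchwingerDyson

end TraceMoments

section LeftInvariance

variable {G E : Type*} [Group G] [TopologicalSpace G] [ContinuousMul G] [CompactSpace G]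
  [MeasurableSpace G] [BorelSpace G] [NormedAddCommGroup E] [NormedSpace ℝ E]
  [SecondCountableTopologyEither G E]

lemma integral_eq_zero_of_hasDerivAt_mul (μ : Measure G) [IsFiniteMeasure μ]
    [μ.IsMulLeftInvariant] {γ : ℝ → G} {f g : G → E} (hf : Continuous f) (hg : Continuous g)
    (hderiv : ∀ x s, HasDerivAt (fun r => f (γ r * x)) (g (γ s * x)) s) : ∫ x, g x ∂μ = 0 := by
  obtain ⟨c, hc⟩ := (isCompact_range hg).isBounded.exists_norm_le
  have htranslate (s : ℝ) : Continuous fun x => γ s * x := continuous_const_mul _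
  have hintegral := (hasDerivAt_integral_of_dominated_loc_of_deriv_le (μ := μ)
    (F := fun s x => f (γ s * x)) (F' := fun s x => g (γ s * x)) (x₀ := 0) (bound := fun _ => c)
    Filter.univ_mem
    (.of_forall fun s => (hf.comp (htranslate s)).aestronglyMeasurable)
    ((hf.comp (htranslate 0)).integrable_of_hasCompactSupport (.of_compactSpace _))
    (hg.comp (htranslate 0)).aestronglyMeasurable
    (.of_forall fun x s _ => hc _ ⟨_, rfl⟩) (integrable_const c)
    (.of_forall fun x s _ => hderiv x s)).2
  simp only [integral_mul_left_eq_self f, integral_mul_left_eq_self g] at hintegral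
  exact hintegral.unique (hasDerivAt_const 0 _)

end LeftInvariance

section UnitaryGroup

variable {n : Type*} [Fintype n] [DecidableEq n]

instance compactSpace_unitaryGroup : CompactSpace (unitaryGroup n ℂ) := by
  have hclosed : IsClosed (unitaryGroup n ℂ : Set (Matrix n n ℂ)) := isClosed_unitary
  refine isCompact_iff_compactSpace.mp <| IsCompact.of_isClosed_subset
    (isCompact_univ_pi fun _ => isCompact_univ_pi fun _ => isCompact_closedBall (0 : ℂ) 1)
    hclosed fun X hX i _ j _ => mem_closedBall_zero_iff.mpr (entry_norm_bound_of_unitary hX i j)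

lemma norm_trace_pow_le_card_of_mem_unitaryGroup {M : Matrix n n ℂ}
    (hM : M ∈ unitaryGroup n ℂ) (k : ℕ) :
    ‖(M ^ k).trace‖ ≤ Fintype.card n := by
  refine (norm_sum_le_of_le _ fun i _ => entry_norm_bound_of_unitary (pow_mem hM k) i i).trans ?_
  simp

open scoped Matrix.Norms.L2Operator in
/-- The one-parameter subgroup `s ↦ exp (i s H)` of the unitary group. -/
def unitaryCurve (H : selfAdjoint (Matrix n n ℂ)) (s : ℝ) : unitaryGroup n ℂ :=
  selfAdjoint.expUnitary (s • H)

open scoped Matrix.Norms.L2Operator in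
lemma hasDerivAt_unitaryCurve_mul_apply (H : selfAdjoint (Matrix n n ℂ)) (X : unitaryGroup n ℂ)
    (i j : n) (s : ℝ) :
    HasDerivAt (fun r => (unitaryCurve H r * X : unitaryGroup n ℂ).1 i j)
      (((I • H.1) * (unitaryCurve H s * X : unitaryGroup n ℂ).1) i j) s := by
  have hexp : HasDerivAt (fun r => (unitaryCurve H r).1) ((I • H.1) * (unitaryCurve H s).1) s := by
    convert! hasDerivAt_exp_smul_const' (𝕂 := ℝ) (I • H.1) s using 1
    all_goals simp [unitaryCurve, smul_comm I]
  have hmul := hexp.mul_const X.1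
  rw [mul_assoc] at hmul
  exact (entryLinearMap ℝ ℂ i j).toContinuousLinearMap.hasFDerivAt.comp_hasDerivAt s hmul

lemma hasDerivAt_unitaryCurve_mul_conjTranspose_apply (H : selfAdjoint (Matrix n n ℂ))
    (X : unitaryGroup n ℂ) (i j : n) (s : ℝ) :
    HasDerivAt (fun r => (unitaryCurve H r * X : unitaryGroup n ℂ).1ᴴ i j)
      (-((unitaryCurve H s * X : unitaryGroup n ℂ).1ᴴ * (I • H.1)) i j) s := by
  have hskew : (I • H.1)ᴴ = -(I • H.1) := by
    rw [conjTranspose_smul, ← star_eq_conjTranspose H.1, H.2.star_eq]; simp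
  convert! (hasDerivAt_unitaryCurve_mul_apply H X j i s).star using 1
  rw [← conjTranspose_apply, conjTranspose_mul, hskew, Matrix.mul_neg, Matrix.neg_apply]

end UnitaryGroup

section PolynomialFunctions

open MvPolynomial

variable {n : Type*}

variable (n) in
/-- Polynomials in the entries of a generic matrix and of its inverse. -/
abbrev EntryPolynomial : Type _ := MvPolynomial ((n × n) ⊕ (n × n)) ℂ

variable (n) in
/-- The generic matrix, standing for the variable `X` ranging over the unitary group. -/
def genericMatrix : Matrix n n (EntryPolynomial n) := of fun i j => X (.inl (i, j))

variable (n) in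
/-- The second generic matrix, standing for the inverse `X* = X⁻¹`. -/
def genericInverse : Matrix n n (EntryPolynomial n) := of fun i j => X (.inr (i, j))

variable [Fintype n]

/-- The infinitesimal action `X ↦ A X`, `X⁻¹ ↦ -X⁻¹ A` of left multiplication by `1 + ε A`. -/
def leftDerivation (A : Matrix n n ℂ) : Derivation ℂ (EntryPolynomial n) (EntryPolynomial n) :=
  mkDerivation ℂ (Sum.elim
    (fun p => (A.map C * genericMatrix n : Matrix n n (EntryPolynomial n)) p.1 p.2)
    fun p => -(genericInverse n * A.map C : Matrix n n (EntryPolynomial n)) p.1 p.2)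

lemma map_leftDerivation_genericMatrix (A : Matrix n n ℂ) :
    (genericMatrix n).map (leftDerivation A) = A.map C * genericMatrix n := by
  ext1 i j
  simp [genericMatrix, leftDerivation, mkDerivation_X]

lemma map_leftDerivation_genericInverse (A : Matrix n n ℂ) :
    (genericInverse n).map (leftDerivation A) = -(genericInverse n * A.map C) := by
  ext1 i j
  simp [genericInverse, leftDerivation, mkDerivation_X]

lemma leftDerivation_add (A B : Matrix n n ℂ) :
    leftDerivation (A + B) = leftDerivation A + leftDerivation B := by
  refine derivation_ext ?_
  rintro (⟨i, j⟩ | ⟨i, j⟩) <;>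
    simp [leftDerivation, mkDerivation_X, Matrix.add_mul, Matrix.mul_add, Matrix.map_add, add_comm]

lemma leftDerivation_smul (c : ℂ) (A : Matrix n n ℂ) :
    leftDerivation (c • A) = c • leftDerivation A := by
  have hmap : (c • A).map C = (c • A.map C : Matrix n n (EntryPolynomial n)) := by
    ext1 i j
    simp [smul_eq_C_mul]
  refine derivation_ext ?_
  rintro (⟨i, j⟩ | ⟨i, j⟩) <;> simp [leftDerivation, mkDerivation_X, hmap]

variable [DecidableEq n]

/-- Evaluation of an entry polynomial at a unitary matrix and its conjugate transpose. -/
def evalUnitary (U : unitaryGroup n ℂ) : EntryPolynomial n →ₐ[ℂ] ℂ :=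
  aeval (Sum.elim (fun p => U.1 p.1 p.2) fun p => U.1ᴴ p.1 p.2)

lemma map_evalUnitary_genericMatrix (U : unitaryGroup n ℂ) :
    (genericMatrix n).map (evalUnitary U) = U.1 := by
  ext i j
  simp [genericMatrix, evalUnitary]

lemma map_evalUnitary_genericInverse (U : unitaryGroup n ℂ) :
    (genericInverse n).map (evalUnitary U) = U.1ᴴ := by
  ext i j
  simp [genericInverse, evalUnitary]

lemma evalUnitary_mul_apply (U : unitaryGroup n ℂ) (P Q : Matrix n n (EntryPolynomial n))
    (i j : n) :
    evalUnitary U ((P * Q) i j) = (P.map (evalUnitary U) * Q.map (evalUnitary U)) i j := by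
  rw [← Matrix.map_mul, map_apply]

lemma evalUnitary_trace_pow (U : unitaryGroup n ℂ) (P : Matrix n n (EntryPolynomial n)) (k : ℕ) :
    evalUnitary U (P ^ k).trace = (P.map (evalUnitary U) ^ k).trace := by
  rw [AddMonoidHom.map_trace, ← AlgHom.mapMatrix_apply, map_pow, AlgHom.mapMatrix_apply]

lemma map_evalUnitary_map_C (U : unitaryGroup n ℂ) (A : Matrix n n ℂ) :
    (A.map C).map (evalUnitary U) = A := by
  ext i j
  simp [evalUnitary]

lemma continuous_evalUnitary (f : EntryPolynomial n) :
    Continuous fun U : unitaryGroup n ℂ => evalUnitary U f := by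
  refine (continuous_eval f).comp (continuous_pi ?_)
  rintro (⟨i, j⟩ | ⟨i, j⟩)
  · exact continuous_subtype_val.matrix_elem i j
  · exact continuous_subtype_val.matrix_conjTranspose.matrix_elem i j

lemma hasDerivAt_evalUnitary_unitaryCurve_mul (H : selfAdjoint (Matrix n n ℂ))
    (U : unitaryGroup n ℂ) (f : EntryPolynomial n) (s : ℝ) :
    HasDerivAt (fun r => evalUnitary (unitaryCurve H r * U) f)
      (evalUnitary (unitaryCurve H s * U) (leftDerivation (I • H.1) f)) s := by
  induction f using MvPolynomial.induction_on with
  | C c => simpa using hasDerivAt_const s c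
  | add f g hf hg => simpa [Pi.add_def] using hf.add hg
  | mul_X f v hf =>
    have hX : HasDerivAt (fun r => evalUnitary (unitaryCurve H r * U) (X v))
        (evalUnitary (unitaryCurve H s * U) (leftDerivation (I • H.1) (X v))) s := by
      obtain ⟨i, j⟩ | ⟨i, j⟩ := v
      · convert! hasDerivAt_unitaryCurve_mul_apply H U i j s using 1
        · simp [evalUnitary]
        · rw [leftDerivation, mkDerivation_X, Sum.elim_inl, evalUnitary_mul_apply,
            map_evalUnitary_map_C, map_evalUnitary_genericMatrix]
      · convert! hasDerivAt_unitaryCurve_mul_conjTranspose_apply H U i j s using 1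
        · simp [evalUnitary]
        · rw [leftDerivation, mkDerivation_X, Sum.elim_inr, map_neg, evalUnitary_mul_apply,
            map_evalUnitary_map_C, map_evalUnitary_genericInverse]
    convert! hf.mul hX using 1
    · simp [Pi.mul_def]
    · simp only [Derivation.leibniz, map_add, smul_eq_mul, map_mul]
      ring

end PolynomialFunctions

section HaarIntegral

variable {n : Type*} [Fintype n] [DecidableEq n] [MeasurableSpace (unitaryGroup n ℂ)]
  [BorelSpace (unitaryGroup n ℂ)] (μ : Measure (unitaryGroup n ℂ))

lemma integrable_evalUnitary [IsFiniteMeasure μ] (f : EntryPolynomial n) :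
    Integrable (fun U => evalUnitary U f) μ :=
  (continuous_evalUnitary f).integrable_of_hasCompactSupport (.of_compactSpace _)

/-- Integration of entry polynomials over the unitary group. -/
def unitaryIntegral [IsFiniteMeasure μ] : EntryPolynomial n →ₗ[ℂ] ℂ where
  toFun f := ∫ U, evalUnitary U f ∂μ
  map_add' f g := by
    simp only [map_add]
    exact integral_add (integrable_evalUnitary μ f) (integrable_evalUnitary μ g)
  map_smul' c f := by
    simp only [map_smul, integral_smul, RingHom.id_apply]

lemma unitaryIntegral_leftDerivation [IsFiniteMeasure μ] [μ.IsMulLeftInvariant]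
    (A : Matrix n n ℂ) (f : EntryPolynomial n) : unitaryIntegral μ (leftDerivation A f) = 0 := by
  have hskew (H : selfAdjoint (Matrix n n ℂ)) :
      unitaryIntegral μ (leftDerivation (I • H.1) f) = 0 :=
    integral_eq_zero_of_hasDerivAt_mul μ (continuous_evalUnitary f) (continuous_evalUnitary _)
      fun U s => hasDerivAt_evalUnitary_unitaryCurve_mul H U f s
  have hself (H : selfAdjoint (Matrix n n ℂ)) : unitaryIntegral μ (leftDerivation H.1 f) = 0 := by
    simpa [leftDerivation_smul] using hskew H
  rw [← realPart_add_I_smul_imaginaryPart A, leftDerivation_add, Derivation.add_apply, map_add,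
    hskew, hself, add_zero]

lemma isSchwingerDyson_unitaryIntegral [IsProbabilityMeasure μ] [μ.IsMulLeftInvariant] :
    IsSchwingerDyson (fun i j => leftDerivation (single i j (1 : ℂ))) (genericMatrix n)
      (genericInverse n) (unitaryIntegral μ) where
  map_one := by simp [unitaryIntegral]
  map_derivation i j f := unitaryIntegral_leftDerivation μ _ f
  map_left i j := by
    simp [map_leftDerivation_genericMatrix]
  map_right i j := by
    simp [map_leftDerivation_genericInverse]
  map_mul_apply f i j := by
    refine integral_congr_ae (.of_forall fun U => ?_)
    have hU : U.1 * U.1ᴴ = 1 := Unitary.mul_star_self_of_mem U.2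
    simp only [map_mul, evalUnitary_mul_apply, map_evalUnitary_genericMatrix,
      map_evalUnitary_genericInverse, hU, one_apply]
    split_ifs <;> simp

lemma integral_trace_pow_mul_trace_conjTranspose_pow [IsProbabilityMeasure μ]
    [μ.IsMulLeftInvariant] {j k : ℕ} (hj : 1 ≤ j) :
    ∫ U : unitaryGroup n ℂ, (U.1 ^ j).trace * (U.1ᴴ ^ k).trace ∂μ =
      if j = k then ((min j (Fintype.card n) : ℕ) : ℂ) else 0 := by
  have hmoment : ∫ U : unitaryGroup n ℂ, (U.1 ^ j).trace * (U.1ᴴ ^ k).trace ∂μ =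
      unitaryIntegral μ ((genericMatrix n ^ j).trace * (genericInverse n ^ k).trace) := by
    simp [unitaryIntegral, evalUnitary_trace_pow, map_evalUnitary_genericMatrix,
      map_evalUnitary_genericInverse]
  rw [hmoment]
  split_ifs with hjk
  · rw [← hjk, (isSchwingerDyson_unitaryIntegral μ).map_trace_pow_mul_trace_pow_self hj]
  · exact (isSchwingerDyson_unitaryIntegral μ).map_trace_pow_mul_trace_pow_of_ne hjk

end HaarIntegral

section LogDerivative

variable {n R 𝕜 : Type*} [Fintype n] [DecidableEq n] [CommRing R] [NontriviallyNormedField 𝕜]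

lemma mapMatrix_evalRingHom_one_sub_X_smul (M : Matrix n n R) (s : R) :
    (Polynomial.evalRingHom s).mapMatrix (1 - (Polynomial.X : Polynomial R) • M.map Polynomial.C) =
      1 - s • M := by
  ext i j
  simp [one_apply, apply_ite, mul_comm s]

lemma eval_charpolyRev_eq_det (M : Matrix n n R) (s : R) :
    M.charpolyRev.eval s = (1 - s • M).det := by
  rw [← mapMatrix_evalRingHom_one_sub_X_smul, ← RingHom.map_det, Polynomial.coe_evalRingHom,
    charpolyRev]

lemma mapMatrix_evalRingHom_revAdjugate (M : Matrix n n R) (s : R) :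
    (Polynomial.evalRingHom s).mapMatrix (revAdjugate M) = (1 - s • M).adjugate := by
  rw [revAdjugate, RingHom.map_adjugate, mapMatrix_evalRingHom_one_sub_X_smul]

lemma deriv_det_one_sub_smul (M : Matrix n n 𝕜) (s : 𝕜) :
    deriv (fun z => (1 - z • M).det) s = -((1 - s • M).adjugate * M).trace := by
  have hC : (Polynomial.evalRingHom s).mapMatrix (M.map Polynomial.C) = M := by
    ext i j
    simp
  simp_rw [← eval_charpolyRev_eq_det]
  rw [Polynomial.deriv, derivative_charpolyRev, Polynomial.eval_neg, ← Polynomial.coe_evalRingHom,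
    AddMonoidHom.map_trace, ← RingHom.mapMatrix_apply, map_mul, mapMatrix_evalRingHom_revAdjugate,
    hC]

lemma deriv_det_one_sub_smul_div_det (M : Matrix n n 𝕜) (s : 𝕜) :
    deriv (fun z => (1 - z • M).det) s / (1 - s • M).det = -((1 - s • M)⁻¹ * M).trace := by
  rw [deriv_det_one_sub_smul, Matrix.inv_def, Ring.inverse_eq_inv', smul_mul_assoc, trace_smul,
    smul_eq_mul, neg_div, div_eq_inv_mul]

lemma hasSum_pow_mul_trace_pow_succ {M : Matrix n n 𝕜} {s : 𝕜}
    (hM : Summable fun k : ℕ => (s • M) ^ k) :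
    HasSum (fun k : ℕ => s ^ k * (M ^ (k + 1)).trace)
      (-(deriv (fun z => (1 - z • M).det) s / (1 - s • M).det)) := by
  rw [deriv_det_one_sub_smul_div_det, neg_neg, inv_eq_right_inv hM.one_sub_mul_tsum_pow]
  convert! (hM.hasSum.mul_right M).map (traceAddMonoidHom n 𝕜) continuous_id.matrix_trace using 1
  ext k
  simp [smul_pow, pow_succ]

lemma summable_smul_pow_of_mem_unitaryGroup {M : Matrix n n ℂ} (hM : M ∈ unitaryGroup n ℂ)
    {s : ℂ} (hs : ‖s‖ < 1) : Summable fun k : ℕ => (s • M) ^ k := by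
  refine Pi.summable.mpr fun i => Pi.summable.mpr fun j => ?_
  refine .of_norm_bounded (summable_geometric_of_lt_one (norm_nonneg s) hs) fun k => ?_
  rw [smul_pow, Matrix.smul_apply, norm_smul, norm_pow]
  exact mul_le_of_le_one_right (by positivity) (entry_norm_bound_of_unitary (pow_mem hM k) i j)

lemma norm_pow_mul_trace_pow_succ_le {M : Matrix n n ℂ} (hM : M ∈ unitaryGroup n ℂ) (s : ℂ)
    (k : ℕ) : ‖s ^ k * (M ^ (k + 1)).trace‖ ≤ ‖s‖ ^ k * Fintype.card n := by
  rw [norm_mul, norm_pow]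
  gcongr
  exact norm_trace_pow_le_card_of_mem_unitaryGroup hM _

end LogDerivative

section Series

lemma hasSum_pow_mul_min_succ {K : Type*} [NormedField K] {w : K} (hw : ‖w‖ < 1) (N : ℕ) :
    HasSum (fun k : ℕ => w ^ k * ((min (k + 1) N : ℕ) : K)) ((1 - w ^ N) / (1 - w) ^ 2) := by
  have hw1 : 1 - w ≠ 0 := sub_ne_zero.mpr fun h => by simp [← h] at hw
  induction N with
  | zero => simp
  | succ N ih =>
    have htail : HasSum (fun k : ℕ => if N ≤ k then w ^ k else 0) (w ^ N / (1 - w)) := by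
      rw [← (add_left_injective N).hasSum_iff fun k hk => if_neg fun hNk =>
        hk ⟨k - N, Nat.sub_add_cancel hNk⟩]
      simpa [Function.comp_def, pow_add, mul_comm, div_eq_mul_inv] using
        (hasSum_geometric_of_norm_lt_one hw).mul_left (w ^ N)
    convert! ih.add htail using 1
    · ext k
      split_ifs with hNk
      · rw [min_eq_right (by lia), min_eq_right (by lia)]
        push_cast
        ring
      · rw [min_eq_left (by lia), min_eq_left (by lia), add_zero]
    · field

lemma hasSum_integral_mul_of_norm_le {α ι κ A : Type*} [MeasurableSpace α] [Countable ι]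
    [Countable κ] [NormedRing A] [NormedSpace ℝ A] [CompleteSpace A] {μ : Measure α}
    [IsFiniteMeasure μ] {f : ι → α → A} {g : κ → α → A} {F G : α → A} {a : ι → ℝ} {b : κ → ℝ}
    (hf : ∀ i, AEStronglyMeasurable (f i) μ) (hg : ∀ j, AEStronglyMeasurable (g j) μ)
    (ha : Summable a) (hb : Summable b) (hfa : ∀ i x, ‖f i x‖ ≤ a i) (hgb : ∀ j x, ‖g j x‖ ≤ b j)
    (hF : ∀ x, HasSum (f · x) (F x)) (hG : ∀ x, HasSum (g · x) (G x)) :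
    HasSum (fun p : ι × κ => ∫ x, f p.1 x * g p.2 x ∂μ) (∫ x, F x * G x ∂μ) := by
  cases isEmpty_or_nonempty α
  · simp [Measure.eq_zero_of_isEmpty μ]
  have ha0 (i) : 0 ≤ a i := (norm_nonneg _).trans (hfa i (Classical.arbitrary α))
  have hb0 (j) : 0 ≤ b j := (norm_nonneg _).trans (hgb j (Classical.arbitrary α))
  refine hasSum_integral_of_dominated_convergence (fun p _ => a p.1 * b p.2)
    (fun p => (hf p.1).mul (hg p.2)) (fun p => .of_forall fun x => ?_)
    (.of_forall fun _ => ha.mul_of_nonneg hb ha0 hb0) (integrable_const _)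
    (.of_forall fun x => ?_)
  · exact norm_mul_le_of_le (hfa _ x) (hgb _ x)
  · have hfs : Summable fun i => ‖f i x‖ := ha.of_nonneg_of_le (fun _ => norm_nonneg _) (hfa · x)
    have hgs : Summable fun j => ‖g j x‖ := hb.of_nonneg_of_le (fun _ => norm_nonneg _) (hgb · x)
    have hfg := summable_mul_of_summable_norm hfs hgs
    exact ((hF x).mul (hG x) hfg :)

end Series

section LogDerivativeIntegral

variable {n : Type*} [Fintype n] [DecidableEq n] [MeasurableSpace (unitaryGroup n ℂ)]
  [BorelSpace (unitaryGroup n ℂ)] (μ : Measure (unitaryGroup n ℂ)) [IsProbabilityMeasure μ]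

lemma integral_pow_mul_trace_pow_mul_pow_mul_trace_pow [μ.IsMulLeftInvariant] (s t : ℂ)
    (j k : ℕ) :
    ∫ U : unitaryGroup n ℂ, s ^ j * (U.1ᴴ ^ (j + 1)).trace * (t ^ k * (U.1 ^ (k + 1)).trace) ∂μ =
      if j = k then (s * t) ^ k * (min (k + 1) (Fintype.card n) : ℕ) else 0 := by
  have hmoment :=
    integral_trace_pow_mul_trace_conjTranspose_pow μ (k := j + 1) (Nat.le_add_left 1 k)
  simp_rw [mul_mul_mul_comm (s ^ j), mul_comm (trace (_ᴴ ^ (j + 1)))]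
  rw [integral_const_mul, hmoment]
  obtain rfl | hjk := eq_or_ne j k
  · simp [mul_pow]
  · simp [hjk, hjk.symm]

lemma integral_logDeriv_det_mul_logDeriv_det [μ.IsMulLeftInvariant] {s t : ℂ}
    (hs : ‖s‖ < 1) (ht : ‖t‖ < 1) :
    ∫ U : unitaryGroup n ℂ, deriv (fun z => (1 - z • U.1ᴴ).det) s / (1 - s • U.1ᴴ).det *
        (deriv (fun z => (1 - z • U.1).det) t / (1 - t • U.1).det) ∂μ =
      (1 - (s * t) ^ Fintype.card n) / (1 - s * t) ^ 2 := by
  have hstar (U : unitaryGroup n ℂ) : U.1ᴴ ∈ unitaryGroup n ℂ := Unitary.star_mem U.2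
  have hbound {r : ℂ} (hr : ‖r‖ < 1) : Summable fun k : ℕ => ‖r‖ ^ k * (Fintype.card n : ℝ) :=
    (summable_geometric_of_lt_one (norm_nonneg r) hr).mul_right _
  have hst : ‖s * t‖ < 1 := by
    rw [norm_mul]
    exact mul_lt_one_of_nonneg_of_lt_one_left (norm_nonneg s) hs ht.le
  have hdouble := hasSum_integral_mul_of_norm_le (μ := μ)
    (f := fun k (U : unitaryGroup n ℂ) => s ^ k * (U.1ᴴ ^ (k + 1)).trace)
    (g := fun k (U : unitaryGroup n ℂ) => t ^ k * (U.1 ^ (k + 1)).trace)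
    (fun k => Continuous.aestronglyMeasurable (by fun_prop))
    (fun k => Continuous.aestronglyMeasurable (by fun_prop))
    (hbound hs) (hbound ht)
    (fun k U => norm_pow_mul_trace_pow_succ_le (hstar U) s k)
    (fun k U => norm_pow_mul_trace_pow_succ_le U.2 t k)
    (fun U => hasSum_pow_mul_trace_pow_succ (summable_smul_pow_of_mem_unitaryGroup (hstar U) hs))
    (fun U => hasSum_pow_mul_trace_pow_succ (summable_smul_pow_of_mem_unitaryGroup U.2 ht))
  simp_rw [integral_pow_mul_trace_pow_mul_pow_mul_trace_pow, neg_mul_neg] at hdouble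
  have hinj : Function.Injective fun k : ℕ => (k, k) := fun j k h => congrArg Prod.fst h
  rw [← hinj.hasSum_iff fun p hp => if_neg fun hjk => hp ⟨p.1, Prod.ext rfl hjk⟩] at hdouble
  refine hdouble.unique ?_
  simpa [Function.comp_def] using hasSum_pow_mul_min_succ hst (Fintype.card n)

end LogDerivativeIntegral

section Zeta

lemma norm_exp_neg_lt_one {x : ℂ} (hx : 0 < x.re) : ‖exp (-x)‖ < 1 := by
  simpa [norm_exp] using hx

lemma hasDerivAt_exp_neg (x : ℂ) : HasDerivAt (fun y => exp (-y)) (-exp (-x)) x := by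
  simpa using (hasDerivAt_neg x).cexp

lemma zl_eq_neg_exp_neg_div : zl = fun x => -exp (-x) / (1 - exp (-x)) := by
  ext x
  by_cases hx : 1 - exp (-x) = 0
  · simp [zl, zf, hx]
  · have hzf : HasDerivAt zf _ x := ((hasDerivAt_exp_neg x).const_sub 1).fun_inv hx
    rw [zl, hzf.deriv, zf]
    field

lemma deriv_zl {x : ℂ} (hx : 1 - exp (-x) ≠ 0) :
    deriv zl x = exp (-x) / (1 - exp (-x)) ^ 2 := by
  have hzl := (hasDerivAt_exp_neg x).fun_neg.fun_div ((hasDerivAt_exp_neg x).const_sub 1) hx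
  rw [zl_eq_neg_exp_neg_div, hzl.deriv]
  ring

lemma exp_neg_mul_one_sub_exp_pow_div {x : ℂ} (hx : 1 - exp (-x) ≠ 0) (N : ℕ) :
    exp (-x) * ((1 - exp (-x) ^ N) / (1 - exp (-x)) ^ 2) =
      deriv zl x + exp (-(N : ℂ) * x) * zf x * zf (-x) := by
  have hpow : exp (-(N : ℂ) * x) = exp (-x) ^ N := by
    rw [← exp_nat_mul, neg_mul, mul_neg]
  have hzf : zf (-x) = -exp (-x) / (1 - exp (-x)) := by
    rw [zf, exp_neg (-x)]
    have hexp := exp_ne_zero (-x)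
    grind
  rw [deriv_zl hx, hpow, hzf, zf]
  field

end Zeta

instance borelSpace_unitaryGroup (N : ℕ) : BorelSpace (unitaryGroup (Fin N) ℂ) :=
  have : BorelSpace (Matrix (Fin N) (Fin N) ℂ) :=
    inferInstanceAs (BorelSpace (Fin N → Fin N → ℂ))
  Subtype.borelSpace _

/-- `e^{−α−β} ∫_{U(N)} (Λ_X'/Λ_X)(e^{−α}) (Λ_{X*}'/Λ_{X*})(e^{−β}) dX
      = (z'/z)'(α+β) + e^{−N(α+β)} z(α+β) z(−α−β)`. -/
theorem stmt_13 (N : ℕ) (μ : Measure (Matrix.unitaryGroup (Fin N) ℂ))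
    [IsProbabilityMeasure μ]
    (hHaar : ∀ A : Matrix.unitaryGroup (Fin N) ℂ,
      MeasurePreserving (fun X => A * X) μ μ)
    (α β : ℂ) (hα : 0 < α.re) (hβ : 0 < β.re) :
    Complex.exp (-α - β) *
        ∫ X, (deriv (Lam X) (Complex.exp (-α)) / Lam X (Complex.exp (-α))) *
          (deriv (LamStar X) (Complex.exp (-β)) / LamStar X (Complex.exp (-β))) ∂μ =
      deriv zl (α + β) +
        Complex.exp (-(N : ℂ) * (α + β)) * zf (α + β) * zf (-α - β) := by
  have : μ.IsMulLeftInvariant := ⟨fun A => (hHaar A).map_eq⟩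
  have hre : 0 < (α + β).re := add_pos hα hβ
  have hne : 1 - exp (-(α + β)) ≠ 0 := sub_ne_zero.mpr fun h =>
    (norm_exp_neg_lt_one hre).ne (h ▸ norm_one)
  have hint := integral_logDeriv_det_mul_logDeriv_det μ (norm_exp_neg_lt_one hα)
    (norm_exp_neg_lt_one hβ)
  rw [← exp_add, ← neg_add, Fintype.card_fin] at hint
  calc
    _ = exp (-(α + β)) * ((1 - exp (-(α + β)) ^ N) / (1 - exp (-(α + β))) ^ 2) := by
      rw [← hint, ← neg_add']
      rfl
    _ = _ := by rw [exp_neg_mul_one_sub_exp_pow_div hne, neg_add']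

end
end
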